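/- (Fragmentation via Hamiltonian isotopy) Let f₀ ∈ Diff^∞_ω(𝔻) be equal to the identity near the boundary ∂𝔻. Then for every neighbourhood W of the identity in Diff^∞_ω(𝔻) for the C^∞ topology, there exist an integer n ≥ 1 and g₁, …, g_n ∈ W such that f₀ = g_n ∘ … ∘ g₁; moreover, for each fixed k, the g_i can be chosen at C^k distance O(1/n) from the identity. -/

import Mathlib

/-!
Since `ℝ × ℝ` carries the sup norm, `Disc` is the square `[-1, 1]²`. It suffices to join `f₀` to the
identity by a smooth path of area preserving diffeomorphisms of the square: subdividing the time
interval into `n` equal parts writes `f₀` as a product of `n` increments at `C^k` distance `O(1 / n)`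
from the identity (`crDist_increment`, `fragmentation_of_path`).

The path is first built without the area condition. Extend `f₀` by the identity to a diffeomorphism
`f` of the plane, identified with `ℂ`. Instead of flows of vector fields, discrete Euler steps are
used. Conjugating the translation by `ε` by `f` gives the map `z ↦ z + ε * exp (U_ε z)`, where
`U_ε` is a smooth, compactly supported logarithm of the averaged derivative of `f` along horizontal
segments (`exists_log_field`). Scaling the logarithm, with `χ` a smooth step from `0` to `1`, gives
the Euler steps of the fields `exp (χ(t) U_ε)`. Iterating such steps from the left half plane,
where they are translations, produces maps `F_t` (`conjMap`, `stepConj`) conjugating the translation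
by `ε` to the steps; `F_t` is the identity for `t ≤ 0` and is `f` for `t ≥ 1`.

The maps `F_t` need not be the identity far to the right. A discrete Grönwall estimate
(`GoodField.norm_fderiv_conj_sub_le`) shows that `F_t` sends horizontal lines to curves almost
following the direction field, and a rotation index argument in the style of Hopf (`no_near_return`)
shows that such curves cannot return near themselves. By the pigeonhole principle they leave the
support of the field after a bounded length (`GoodField.exists_exit`), with bounds uniform in `ε`
and `t`. There `F_t` commutes with the translation by `ε`, and its derivative has positive
determinant and nonnegative trace, so that `F_t` can be interpolated slowly to the identity through
local diffeomorphisms (`interp_injective`, `exists_cutoff`), which are global ones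
(`bijective_of_injective_fderiv`). A rescaling in the style of the Alexander trick brings the
support back into the square (`exists_plane_isotopy`).

The area condition is then restored by composing with the triangular Knothe rearrangement of the
Jacobian densities (`exists_knothe`, `exists_area_preserving_path`), which plays the role of Moser's
argument, depends smoothly on time and is explicit. It is the identity at both ends of the path,
where the density is `1`.
-/

open Filter MeasureTheory Set Topology
open scoped ENNReal NNReal

noncomputable section

/-- The plane `ℝ²`. -/
abbrev P2 := ℝ × ℝ

/-- The closed unit disc `𝔻 ⊆ ℝ²`. -/
def Disc : Set P2 := Metric.closedBall 0 1

/-- A `C^r` diffeomorphism of the closed unit disc (given together with its inverse). -/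
structure DiscDiffeo (r : ℕ∞) where
  toFun : P2 → P2
  invFun : P2 → P2
  mapsTo : Set.MapsTo toFun Disc Disc
  mapsTo_inv : Set.MapsTo invFun Disc Disc
  left_inv : ∀ x ∈ Disc, invFun (toFun x) = x
  right_inv : ∀ x ∈ Disc, toFun (invFun x) = x
  contDiffOn : ContDiffOn ℝ r toFun Disc
  contDiffOn_inv : ContDiffOn ℝ r invFun Disc

/-- A diffeomorphism of the disc preserves the standard area form `ω` iff the Jacobian
determinant of its derivative equals `1` everywhere on the disc. -/
def DiscDiffeo.AreaPreserving {r : ℕ∞} (f : DiscDiffeo r) : Prop :=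
  ∀ x ∈ Disc, (fderivWithin ℝ f.toFun Disc x).det = 1

/-- `C^r` distance of two maps over a set `s`:
the sum over `i ≤ r` of the sup over `s` of the norms of the differences of the
`i`-th derivatives (`ℝ≥0∞`-valued, so that no boundedness assumptions are needed). -/
def crDistOn (r : ℕ) (s : Set P2) (f g : P2 → P2) : ℝ≥0∞ :=
  ∑ i ∈ Finset.range (r + 1),
    ⨆ x ∈ s, (‖iteratedFDerivWithin ℝ i f s x - iteratedFDerivWithin ℝ i g s x‖₊ : ℝ≥0∞)

/-- `C^r` distance of two maps of the disc. -/
def crDist (r : ℕ) (f g : P2 → P2) : ℝ≥0∞ := crDistOn r Disc f g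

/-- The entropy at time `n` of the finite measurable partition of `X` given by a map
`P : X → Fin m`, with respect to the dynamics `f`:
`−Σ_w μ(X_w) log μ(X_w)`, the sum being over all itineraries `w : Fin n → Fin m`,
where `X_w` is the set of points whose itinerary is `w`. -/
def partitionDynEntropy {X : Type*} [MeasurableSpace X] (μ : Measure X) (f : X → X)
    {m : ℕ} (P : X → Fin m) (n : ℕ) : ℝ :=
  -∑ w : Fin n → Fin m,
      (μ {x | ∀ i : Fin n, P (f^[(i : ℕ)] x) = w i}).toReal *
        Real.log (μ {x | ∀ i : Fin n, P (f^[(i : ℕ)] x) = w i}).toReal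

/-- The Kolmogorov–Sinai (metric) entropy of `f` with respect to `μ`: the supremum over
all finite measurable partitions of the asymptotic exponential rate of the partition
entropies. -/
def kolmogorovSinaiEntropy {X : Type*} [MeasurableSpace X] (μ : Measure X) (f : X → X) :
    EReal :=
  ⨆ (m : ℕ) (P : {P : X → Fin m // Measurable P}),
    Filter.atTop.liminf fun n : ℕ => ((partitionDynEntropy μ f P.1 n / n : ℝ) : EReal)

/-- The normalized Lebesgue (area) measure on the disc. -/
def discMeasure : Measure P2 := (volume Disc)⁻¹ • volume.restrict Disc

end

noncomputable section

/-- The composition `g (n-1) ∘ ⋯ ∘ g 1 ∘ g 0` of a finite sequence of maps. -/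
def seqComp : {n : ℕ} → (Fin n → (P2 → P2)) → P2 → P2
  | 0, _ => id
  | n + 1, g => g (Fin.last n) ∘ seqComp fun i => g i.castSucc

end

open scoped ContDiff

/-! ### Parameter integrals and complex logarithms -/

/-- Finite order case, by induction on the order over all target spaces at once, since the derivative
of the integral is the integral of a derivative with values in a space of linear maps. -/
theorem contDiff_intervalIntegral_nat {H : Type} [NormedAddCommGroup H] [NormedSpace ℝ H]
    [ProperSpace H] (a b : ℝ) (n : ℕ) :
    ∀ {E : Type} [NormedAddCommGroup E] [NormedSpace ℝ E] [CompleteSpace E] (g : H → ℝ → E),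
      ContDiff ℝ ∞ (fun q : H × ℝ => g q.1 q.2) →
      ContDiff ℝ n (fun p : H => ∫ s in a..b, g p s) := by
  induction n with
  | zero =>
    intro E _ _ _ g hg
    refine contDiff_zero.2 ?_
    exact intervalIntegral.continuous_parametric_intervalIntegral_of_continuous' hg.continuous a b
  | succ n ih =>
    intro E _ _ _ g hg
    have hg' : ContDiff ℝ ∞ (fun q : H × ℝ => fderiv ℝ (fun p => g p q.2) q.1) := by
      have h1 : ContDiff ℝ ∞ (Function.uncurry fun (q : H × ℝ) (p : H) => g p q.2) := by
        have : ContDiff ℝ ∞ (fun r : (H × ℝ) × H => (r.2, r.1.2)) := by fun_prop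
        exact hg.comp this
      exact ContDiff.fderiv (m := ∞) h1 contDiff_fst (by simp)
    have hd : ∀ p s, HasFDerivAt (fun p => g p s) (fderiv ℝ (fun p => g p s) p) p := by
      intro p s
      have : ContDiff ℝ ∞ (fun p => g p s) :=
        hg.comp (by fun_prop : ContDiff ℝ ∞ (fun p : H => (p, s)))
      exact (this.differentiable (by simp) p).hasFDerivAt
    have key : ∀ p0, HasFDerivAt (fun p : H => ∫ s in a..b, g p s)
        (∫ s in a..b, fderiv ℝ (fun p => g p s) p0) p0 := by
      intro p0
      obtain ⟨C, hC⟩ := ((isCompact_closedBall p0 1).prod (isCompact_uIcc (a := a) (b := b))).exists_bound_of_continuousOn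
        hg'.continuous.continuousOn
      refine intervalIntegral.hasFDerivAt_integral_of_dominated_of_fderiv_le
        (F' := fun p s => fderiv ℝ (fun p => g p s) p) (bound := fun _ => C)
        (Metric.closedBall_mem_nhds p0 one_pos) ?_ ?_ ?_ ?_ ?_ ?_
      · exact Eventually.of_forall fun p =>
          (hg.continuous.comp (by fun_prop : Continuous fun s : ℝ => (p, s))).aestronglyMeasurable
      · exact (hg.continuous.comp (by fun_prop : Continuous fun s : ℝ => (p0, s))).intervalIntegrable _ _
      · exact (hg'.continuous.comp (by fun_prop : Continuous fun s : ℝ => (p0, s))).aestronglyMeasurable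
      · exact Eventually.of_forall fun s hs p hp => hC (p, s) ⟨hp, uIoc_subset_uIcc hs⟩
      · exact intervalIntegrable_const
      · exact Eventually.of_forall fun s _ p _ => hd p s
    have : ((n + 1 : ℕ) : WithTop ℕ∞) = (n : WithTop ℕ∞) + 1 := by push_cast; rfl
    rw [this, contDiff_succ_iff_hasFDerivAt]
    refine ⟨_, ih _ hg', key⟩

/-- Integrals over a fixed interval depend smoothly on parameters. -/
theorem contDiff_intervalIntegral {H : Type} [NormedAddCommGroup H] [NormedSpace ℝ H]
    [ProperSpace H] (a b : ℝ) {E : Type} [NormedAddCommGroup E] [NormedSpace ℝ E]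
    [CompleteSpace E] (g : H → ℝ → E) (hg : ContDiff ℝ ∞ (fun q : H × ℝ => g q.1 q.2)) :
    ContDiff ℝ ∞ (fun p : H => ∫ s in a..b, g p s) :=
  contDiff_infty.2 fun n => contDiff_intervalIntegral_nat a b n g hg

/-- Integrals up to a variable endpoint depend smoothly on that endpoint and on parameters. -/
theorem contDiff_intervalIntegral_right {H : Type} [NormedAddCommGroup H] [NormedSpace ℝ H]
    [ProperSpace H] (a : ℝ) {E : Type} [NormedAddCommGroup E] [NormedSpace ℝ E]
    [CompleteSpace E] (g : H → ℝ → E) (hg : ContDiff ℝ ∞ (fun q : H × ℝ => g q.1 q.2)) :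
    ContDiff ℝ ∞ (fun p : H × ℝ => ∫ s in a..p.2, g p.1 s) := by
  have : (fun p : H × ℝ => ∫ s in a..p.2, g p.1 s) =
      fun p : H × ℝ => (p.2 - a) • ∫ s in (0:ℝ)..1, g p.1 ((p.2 - a) * s + a) := by
    ext p
    rw [intervalIntegral.smul_integral_comp_mul_add]
    simp
  rw [this]
  refine ContDiff.smul (by fun_prop) ?_
  exact contDiff_intervalIntegral 0 1 (fun (p : H × ℝ) s => g p.1 ((p.2 - a) * s + a))
    (hg.comp (by fun_prop : ContDiff ℝ ∞
      (fun q : (H × ℝ) × ℝ => (q.1.1, (q.1.2 - a) * q.2 + a))))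

/-- A continuous logarithm of a nowhere vanishing function on a normed space. -/
theorem exists_continuous_log {V : Type*} [NormedAddCommGroup V] [NormedSpace ℝ V] (g : V → ℂ)
    (hg : Continuous g) (h0 : ∀ x, g x ≠ 0) :
    ∃ u : V → ℂ, Continuous u ∧ ∀ x, Complex.exp (u x) = g x := by
  obtain ⟨u, hu, he⟩ := Complex.isCoveringMapOn_exp.existsUnique_continuousMap_lifts
    ⟨g, hg⟩ (a₀ := 0) (Complex.exp_log (h0 0)) (fun x ↦ h0 x) |>.exists
  exact ⟨u, u.continuous, fun x => congrFun he x⟩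

/-- A continuous logarithm of a smooth function is smooth: locally it is the principal logarithm of
`g / g x` plus a constant. -/
theorem contDiff_of_exp {V : Type*} [NormedAddCommGroup V] [NormedSpace ℝ V] {g u : V → ℂ}
    (hg : ContDiff ℝ ∞ g) (hu : Continuous u) (he : ∀ x, Complex.exp (u x) = g x) :
    ContDiff ℝ ∞ u := by
  rw [contDiff_iff_contDiffAt]
  intro x
  have h0 : g x ≠ 0 := by rw [← he]; exact Complex.exp_ne_zero _
  have h1 : ∀ᶠ y in 𝓝 x, ‖u y - u x‖ < 1 := by
    have : Tendsto (fun y => ‖u y - u x‖) (𝓝 x) (𝓝 ‖u x - u x‖) :=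
      ((hu.sub continuous_const).norm).tendsto x
    simp only [sub_self, norm_zero] at this
    exact this.eventually_lt_const one_pos
  have h2 : u =ᶠ[𝓝 x] fun y => u x + Complex.log (g y / g x) := by
    filter_upwards [h1] with y hy
    rw [← he y, ← he x, ← Complex.exp_sub, Complex.log_exp]
    · ring
    · have := (abs_lt.1 ((Complex.abs_im_le_norm _).trans_lt hy)).1
      linarith [Real.pi_gt_three]
    · have := (abs_lt.1 ((Complex.abs_im_le_norm _).trans_lt hy)).2
      linarith [Real.pi_gt_three]
  refine ContDiffAt.congr_of_eventuallyEq ?_ h2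
  refine contDiffAt_const.add ?_
  have h3 : ContDiffAt ℝ ∞ Complex.log (g x / g x) := by
    rw [div_self h0]
    exact (Complex.contDiffAt_log (by simp)).restrict_scalars ℝ
  exact ContDiffAt.comp (f := fun y => g y / g x) x h3 (hg.contDiffAt.div_const _)

/-! ### Inverse maps and bijectivity -/

theorem exists_equiv_of_injective {X : Type*} [NormedAddCommGroup X] [NormedSpace ℝ X]
    [FiniteDimensional ℝ X] (A : X →L[ℝ] X) (hA : ∀ v, A v = 0 → v = 0) :
    ∃ B : X ≃L[ℝ] X, (B : X →L[ℝ] X) = A := by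
  have hinj : Function.Injective (A : X →ₗ[ℝ] X) :=
    (injective_iff_map_eq_zero (A : X →ₗ[ℝ] X)).2 hA
  exact ⟨(LinearEquiv.ofInjectiveEndo (A : X →ₗ[ℝ] X) hinj).toContinuousLinearEquiv, by ext v; rfl⟩

/-- The inverse of a smooth bijection with injective derivatives is smooth. -/
theorem contDiff_inverse {X : Type*} [NormedAddCommGroup X] [NormedSpace ℝ X]
    [FiniteDimensional ℝ X] {P Q : X → X} (hP : ContDiff ℝ ∞ P)
    (hi : ∀ x v, fderiv ℝ P x v = 0 → v = 0) (hQP : ∀ x, Q (P x) = x) (hPQ : ∀ x, P (Q x) = x) :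
    ContDiff ℝ ∞ Q := by
  have : CompleteSpace X := FiniteDimensional.complete ℝ X
  rw [contDiff_iff_contDiffAt]
  intro y
  obtain ⟨B, hB⟩ := exists_equiv_of_injective _ (hi (Q y))
  have hd : HasFDerivAt P (B : X →L[ℝ] X) (Q y) := by
    rw [hB]; exact (hP.differentiable (by simp) _).hasFDerivAt
  have hs := hP.contDiffAt.hasStrictFDerivAt' hd (n := ∞) (by simp)
  have h1 := hP.contDiffAt.to_localInverse (n := ∞) hd (by simp)
  rw [hPQ] at h1
  refine h1.congr_of_eventuallyEq ?_
  have h2 := hs.eventually_right_inverse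
  rw [hPQ] at h2
  filter_upwards [h2] with z hz
  have h3 := hQP (hs.localInverse P B (Q y) z)
  rw [hz] at h3
  exact h3

/-- A smooth family of bijections with injective derivatives has a smooth family of inverses. -/
theorem exists_smooth_inverse_family {E : Type*} [NormedAddCommGroup E] [NormedSpace ℝ E]
    [FiniteDimensional ℝ E] {Φ : ℝ → E → E} (hΦ : ContDiff ℝ ∞ (fun q : ℝ × E => Φ q.1 q.2))
    (hi : ∀ t x v, fderiv ℝ (Φ t) x v = 0 → v = 0) (hb : ∀ t, Function.Bijective (Φ t)) :
    ∃ Ψ : ℝ → E → E, ContDiff ℝ ∞ (fun q : ℝ × E => Ψ q.1 q.2) ∧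
      (∀ t x, Ψ t (Φ t x) = x) ∧ ∀ t x, Φ t (Ψ t x) = x := by
  choose Ψ hl hr using fun t => Function.bijective_iff_has_inverse.1 (hb t)
  refine ⟨Ψ, ?_, hl, hr⟩
  have hP : ContDiff ℝ ∞ (fun q : ℝ × E => (q.1, Φ q.1 q.2)) := contDiff_fst.prodMk hΦ
  have key : ContDiff ℝ ∞ (fun q : ℝ × E => (q.1, Ψ q.1 q.2)) := by
    refine contDiff_inverse hP ?_ (fun q => by simp [hl _ _]) (fun q => by simp [hr _ _])
    rintro ⟨t, x⟩ ⟨τ, v⟩ h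
    have hd := (hΦ.differentiable (by simp) (t, x)).hasFDerivAt
    have h1 : HasFDerivAt (fun q : ℝ × E => (q.1, Φ q.1 q.2))
      ((ContinuousLinearMap.fst ℝ ℝ E).prod (fderiv ℝ (fun q : ℝ × E => Φ q.1 q.2) (t, x))) (t, x) :=
      hasFDerivAt_fst.prodMk hd
    rw [h1.fderiv] at h
    simp only [ContinuousLinearMap.prod_apply, ContinuousLinearMap.coe_fst', Prod.mk_eq_zero] at h
    obtain ⟨rfl, h⟩ := h
    have h2 : HasFDerivAt (Φ t) ((fderiv ℝ (fun q : ℝ × E => Φ q.1 q.2) (t, x)).comp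
        (ContinuousLinearMap.inr ℝ ℝ E)) x :=
      HasFDerivAt.comp (g := fun q : ℝ × E => Φ q.1 q.2) (f := fun x => (t, x)) x hd
        (hasFDerivAt_prodMk_right t x)
    have h3 : v = 0 := hi t x v (by rw [h2.fderiv]; simpa using h)
    simp [h3]
  exact contDiff_snd.comp key

/-- A local diffeomorphism of a finite dimensional space which is the identity outside a ball
is bijective: the image is open and closed, and so is the set of values taken twice. -/
theorem bijective_of_injective_fderiv {E : Type*} [NormedAddCommGroup E] [NormedSpace ℝ E]
    [FiniteDimensional ℝ E] [Nontrivial E] {G : E → E} (hG : ContDiff ℝ ∞ G)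
    (hi : ∀ x v, fderiv ℝ G x v = 0 → v = 0) (R : ℝ) (hR : ∀ x, R ≤ ‖x‖ → G x = x) :
    Function.Bijective G := by
  have : CompleteSpace E := FiniteDimensional.complete ℝ E
  have : ProperSpace E := FiniteDimensional.proper ℝ E
  have hs : ∀ x, ∃ B : E ≃L[ℝ] E, HasStrictFDerivAt G (B : E →L[ℝ] E) x := by
    intro x
    obtain ⟨B, hB⟩ := exists_equiv_of_injective _ (hi x)
    refine ⟨B, hG.contDiffAt.hasStrictFDerivAt' (n := ∞) ?_ (by simp)⟩
    rw [hB]; exact (hG.differentiable (by simp) _).hasFDerivAt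
  have hopen : ∀ x, map G (𝓝 x) = 𝓝 (G x) := fun x => by
    obtain ⟨B, hB⟩ := hs x
    exact hB.map_nhds_eq_of_equiv
  have hloc : ∀ x, ∃ U ∈ 𝓝 x, InjOn G U := fun x => by
    obtain ⟨B, hB⟩ := hs x
    exact ⟨_, (hB.toOpenPartialHomeomorph G).open_source.mem_nhds
      hB.mem_toOpenPartialHomeomorph_source, (hB.toOpenPartialHomeomorph G).injOn⟩
  -- bounded images come from bounded points
  obtain ⟨C, hC⟩ : ∃ C, ∀ x, ‖x‖ ≤ max C ‖G x‖ := ⟨R, fun x => by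
    by_cases h : R ≤ ‖x‖
    · rw [hR x h]; exact le_max_right _ _
    · exact le_max_of_le_left (not_le.1 h).le⟩
  obtain ⟨C', hC'⟩ := (isCompact_closedBall (0 : E) R).exists_bound_of_continuousOn
    hG.continuous.continuousOn
  have hsub : ∀ (y : ℕ → E) (y0 : E) (a : ℕ → E), Tendsto y atTop (𝓝 y0) → (∀ n, G (a n) = y n) →
      ∃ a0, ∃ φ : ℕ → ℕ, StrictMono φ ∧ Tendsto (a ∘ φ) atTop (𝓝 a0) := by
    intro y y0 a hy ha
    obtain ⟨D, hD⟩ := (Metric.isBounded_range_of_tendsto y hy).exists_norm_le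
    obtain ⟨a0, -, φ, hφ, h⟩ := (isCompact_closedBall (0 : E) (max C D)).tendsto_subseq (x := a)
      (fun n => by
        rw [mem_closedBall_zero_iff]
        refine (hC _).trans (max_le_max_left _ ?_)
        rw [ha]; exact hD _ ⟨n, rfl⟩)
    exact ⟨a0, φ, hφ, h⟩
  constructor
  · set S : Set E := {y | ∃ a b, a ≠ b ∧ G a = y ∧ G b = y}
    have hSo : IsOpen S := by
      rw [isOpen_iff_mem_nhds]
      rintro y ⟨a, b, hab, rfl, hb⟩
      obtain ⟨U, V, hU, hV, haU, hbV, hUV⟩ := t2_separation hab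
      have h1 : G '' U ∈ 𝓝 (G a) := by
        rw [← hopen a]; exact image_mem_map (hU.mem_nhds haU)
      have h2 : G '' V ∈ 𝓝 (G a) := by
        rw [← hb, ← hopen b]; exact image_mem_map (hV.mem_nhds hbV)
      filter_upwards [h1, h2]
      rintro z ⟨a', ha', rfl⟩ ⟨b', hb', hz⟩
      exact ⟨a', b', fun h => disjoint_left.1 hUV ha' (h ▸ hb'), rfl, hz⟩
    have hSc : IsClosed S := by
      refine IsSeqClosed.isClosed ?_
      intro y y0 hy hy0
      choose a b hab ha hb using hy
      obtain ⟨a0, φ, hφ, h1⟩ := hsub y y0 a hy0 ha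
      obtain ⟨b0, ψ, hψ, h2⟩ := hsub (y ∘ φ) y0 (b ∘ φ) (hy0.comp hφ.tendsto_atTop) (fun n => hb _)
      have h1' : Tendsto (a ∘ φ ∘ ψ) atTop (𝓝 a0) := h1.comp hψ.tendsto_atTop
      have hga : G a0 = y0 := tendsto_nhds_unique ((hG.continuous.tendsto a0).comp h1')
        ((hy0.comp (hφ.comp hψ).tendsto_atTop).congr fun n => (ha _).symm)
      have hgb : G b0 = y0 := tendsto_nhds_unique ((hG.continuous.tendsto b0).comp h2)
        ((hy0.comp (hφ.comp hψ).tendsto_atTop).congr fun n => (hb _).symm)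
      refine ⟨a0, b0, ?_, hga, hgb⟩
      rintro rfl
      obtain ⟨U, hU, hinj⟩ := hloc a0
      obtain ⟨n, hn1, hn2⟩ := ((h1'.eventually hU).and (h2.eventually hU)).exists
      exact hab _ (hinj hn1 hn2 ((ha _).trans (hb _).symm))
    rcases isClopen_iff.1 ⟨hSc, hSo⟩ with h | h
    · intro a b hab
      by_contra hne
      have : G a ∈ S := ⟨a, b, hne, rfl, hab.symm⟩
      simp [h] at this
    · exfalso
      obtain ⟨y, hy⟩ := NormedSpace.exists_lt_norm ℝ E (max R C')
      have hyS : y ∈ S := h ▸ mem_univ y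
      obtain ⟨a, b, hab, ha, hb⟩ := hyS
      have hfix : ∀ z, G z = y → z = y := by
        intro z hz
        by_cases hzR : R ≤ ‖z‖
        · rw [← hz, hR z hzR]
        · have := hC' z (by rw [mem_closedBall_zero_iff]; exact (not_le.1 hzR).le)
          rw [hz] at this
          exact absurd ((le_max_right R C').trans_lt hy) (not_lt.2 this)
      exact hab ((hfix a ha).trans (hfix b hb).symm)
  · rw [← range_eq_univ]
    have hRo : IsOpen (range G) := by
      rw [isOpen_iff_mem_nhds]
      rintro _ ⟨a, rfl⟩
      rw [← hopen a]; exact range_mem_map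
    have hRc : IsClosed (range G) := by
      refine IsSeqClosed.isClosed ?_
      intro y y0 hy hy0
      choose a ha using hy
      obtain ⟨a0, φ, hφ, h1⟩ := hsub y y0 a hy0 ha
      exact ⟨a0, tendsto_nhds_unique ((hG.continuous.tendsto a0).comp h1)
        ((hy0.comp hφ.tendsto_atTop).congr fun n => (ha _).symm)⟩
    exact (isClopen_iff.1 ⟨hRc, hRo⟩).resolve_left (range_nonempty G).ne_empty

/-! ### C^k distance and subdivision of a path -/

theorem contDiff_iteratedFDeriv_param {V E F : Type*} [NormedAddCommGroup V] [NormedSpace ℝ V]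
    [NormedAddCommGroup E] [NormedSpace ℝ E] [NormedAddCommGroup F] [NormedSpace ℝ F]
    {Θ : V → E → F} (hΘ : ContDiff ℝ ∞ (fun q : V × E => Θ q.1 q.2)) (i : ℕ) :
    ContDiff ℝ ∞ (fun q : V × E => iteratedFDeriv ℝ i (Θ q.1) q.2) := by
  induction i with
  | zero =>
    have : (fun q : V × E => iteratedFDeriv ℝ 0 (Θ q.1) q.2) =
      fun q : V × E => (continuousMultilinearCurryFin0 ℝ E F).symm (Θ q.1 q.2) := by
      ext q; simp [iteratedFDeriv_zero_eq_comp]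
    rw [this]
    exact (continuousMultilinearCurryFin0 ℝ E F).symm.contDiff.comp hΘ
  | succ i ih =>
    have : (fun q : V × E => iteratedFDeriv ℝ (i + 1) (Θ q.1) q.2) =
      fun q : V × E => (continuousMultilinearCurryLeftEquiv ℝ (fun _ : Fin (i + 1) => E) F).symm
        (fderiv ℝ (iteratedFDeriv ℝ i (Θ q.1)) q.2) := by
      ext q; rw [iteratedFDeriv_succ_eq_comp_left]; rfl
    rw [this]
    have h1 : ContDiff ℝ ∞ (fun q : V × E => fderiv ℝ (iteratedFDeriv ℝ i (Θ q.1)) q.2) := by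
      refine ContDiff.fderiv (m := ∞) (n := ∞) (f := fun q : V × E => iteratedFDeriv ℝ i (Θ q.1)) ?_
        contDiff_snd (by simp)
      exact ih.comp (by fun_prop : ContDiff ℝ ∞ (fun r : (V × E) × E => (r.1.1, r.2)))
    exact h1.continuousLinearMap_comp
      ((continuousMultilinearCurryLeftEquiv ℝ (fun _ : Fin (i + 1) => E) F).symm :
        _ →L[ℝ] E [×(i + 1)]→L[ℝ] F)

theorem disc_convex : Convex ℝ Disc := convex_closedBall _ _

theorem disc_compact : IsCompact Disc := isCompact_closedBall _ _

theorem disc_uniqueDiffOn : UniqueDiffOn ℝ Disc :=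
  uniqueDiffOn_convex disc_convex
    ⟨0, by rw [Disc, mem_interior_iff_mem_nhds]; exact Metric.closedBall_mem_nhds _ one_pos⟩

theorem crDist_le_of_smooth {f g : P2 → P2} (hf : ContDiff ℝ ∞ f) (hg : ContDiff ℝ ∞ g) (k : ℕ)
    (c : ℕ → ℝ) (hc : ∀ i, 0 ≤ c i)
    (h : ∀ i, ∀ x ∈ Disc, ‖iteratedFDeriv ℝ i f x - iteratedFDeriv ℝ i g x‖ ≤ c i) :
    crDist k f g ≤ ENNReal.ofReal (∑ i ∈ Finset.range (k + 1), c i) := by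
  rw [ENNReal.ofReal_sum_of_nonneg fun i _ => hc i]
  unfold crDist crDistOn
  refine Finset.sum_le_sum fun i _ => ?_
  refine iSup₂_le ?_
  intro x hx
  rw [iteratedFDerivWithin_eq_iteratedFDeriv disc_uniqueDiffOn
      (hf.contDiffAt.of_le (by exact_mod_cast le_top)) hx,
    iteratedFDerivWithin_eq_iteratedFDeriv disc_uniqueDiffOn
      (hg.contDiffAt.of_le (by exact_mod_cast le_top)) hx,
    ← ENNReal.ofReal_coe_nnreal, coe_nnnorm]
  exact ENNReal.ofReal_le_ofReal (h i x hx)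

/-- The increments of a smooth path of diffeomorphisms are Lipschitz in the time step for the `C^k`
distance, by compactness of `[0,1]² × Disc`. -/
theorem crDist_increment {Φ Ψ : ℝ → P2 → P2} (hΦ : ContDiff ℝ ∞ (fun q : ℝ × P2 => Φ q.1 q.2))
    (hΨ : ContDiff ℝ ∞ (fun q : ℝ × P2 => Ψ q.1 q.2)) (hr : ∀ t x, Φ t (Ψ t x) = x) (k : ℕ) :
    ∃ C : ℝ, 0 < C ∧ ∀ t h, t ∈ Icc (0:ℝ) 1 → h ∈ Icc (0:ℝ) 1 →
      crDist k (Φ (t + h) ∘ Ψ t) id ≤ ENNReal.ofReal (C * h) := by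
  set Θ : ℝ × ℝ → P2 → P2 := fun p x => Φ (p.1 + p.2) (Ψ p.1 x) with hΘdef
  have hΘ : ContDiff ℝ ∞ (fun q : (ℝ × ℝ) × P2 => Θ q.1 q.2) := by
    have h1 : ContDiff ℝ ∞ (fun q : (ℝ × ℝ) × P2 => Ψ q.1.1 q.2) :=
      hΨ.comp (by fun_prop : ContDiff ℝ ∞ (fun q : (ℝ × ℝ) × P2 => (q.1.1, q.2)))
    have h2 : ContDiff ℝ ∞ (fun q : (ℝ × ℝ) × P2 => (q.1.1 + q.1.2, Ψ q.1.1 q.2)) :=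
      ContDiff.prodMk (by fun_prop) h1
    exact hΦ.comp h2
  have hs : ∀ p, ContDiff ℝ ∞ (Θ p) := fun p =>
    hΘ.comp (by fun_prop : ContDiff ℝ ∞ (fun x : P2 => (p, x)))
  have hK : ∀ i, ∃ K : ℝ≥0, LipschitzOnWith K
      (fun q : (ℝ × ℝ) × P2 => iteratedFDeriv ℝ i (Θ q.1) q.2)
      ((Icc (0:ℝ) 1 ×ˢ Icc (0:ℝ) 1) ×ˢ Disc) := fun i =>
    ((contDiff_iteratedFDeriv_param hΘ i).contDiffOn).exists_lipschitzOnWith (by simp)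
      (((convex_Icc 0 1).prod (convex_Icc 0 1)).prod disc_convex)
      ((isCompact_Icc.prod isCompact_Icc).prod disc_compact)
  choose K hK using hK
  refine ⟨∑ i ∈ Finset.range (k + 1), (K i : ℝ) + 1,
    add_pos_of_nonneg_of_pos (Finset.sum_nonneg fun i _ => (K i).2) one_pos, ?_⟩
  intro t h ht hh
  have hid : Θ (t, 0) = id := by ext x : 1; simp [hΘdef, hr]
  refine (crDist_le_of_smooth (hs (t, h)) contDiff_id k (fun i => K i * h)
    (fun i => mul_nonneg (K i).2 hh.1) ?_).trans (ENNReal.ofReal_le_ofReal ?_)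
  · intro i x hx
    have := (hK i).dist_le_mul ((t, h), x) ⟨⟨ht, hh⟩, hx⟩ ((t, 0), x)
      ⟨⟨ht, ⟨le_rfl, zero_le_one⟩⟩, hx⟩
    rw [dist_eq_norm] at this
    simp only at this
    rw [hid] at this
    refine this.trans (le_of_eq ?_)
    simp [Prod.dist_eq, abs_of_nonneg hh.1, hh.1]
  · rw [← Finset.sum_mul]
    exact mul_le_mul_of_nonneg_right (by linarith) hh.1

/-- The diffeomorphism of the disc induced by a pair of mutually inverse smooth maps. -/
noncomputable def mkDiffeo (f g : P2 → P2) (hf : ContDiff ℝ ∞ f) (hg : ContDiff ℝ ∞ g)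
    (hfm : MapsTo f Disc Disc) (hgm : MapsTo g Disc Disc)
    (hl : ∀ x, g (f x) = x) (hr : ∀ x, f (g x) = x) : DiscDiffeo ⊤ where
  toFun := f
  invFun := g
  mapsTo := hfm
  mapsTo_inv := hgm
  left_inv x _ := hl x
  right_inv x _ := hr x
  contDiffOn := hf.contDiffOn
  contDiffOn_inv := hg.contDiffOn

/-- The increments `Φ (τ (i + 1)) ∘ Ψ (τ i)` of a path compose to its value at the last time. -/
theorem seqComp_telescope (Φ Ψ : ℝ → P2 → P2) (hl : ∀ t x, Ψ t (Φ t x) = x) (τ : ℕ → ℝ)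
    (h0 : ∀ x, Φ (τ 0) x = x) (n : ℕ) :
    ∀ x, seqComp (fun i : Fin n => Φ (τ (i + 1)) ∘ Ψ (τ i)) x = Φ (τ n) x := by
  induction n with
  | zero => intro x; simp [seqComp, h0]
  | succ n ih =>
    intro x
    have : seqComp (fun i : Fin (n + 1) => Φ (τ (i + 1)) ∘ Ψ (τ i)) x =
      Φ (τ (n + 1)) (Ψ (τ n) (seqComp (fun i : Fin n => Φ (τ (i + 1)) ∘ Ψ (τ i)) x)) := rfl
    rw [this, ih, hl]

/-- A smooth path of area preserving diffeomorphisms from the identity to `f₀` gives the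
fragmentation, by subdividing the time interval. -/
theorem fragmentation_of_path (f₀ : DiscDiffeo ⊤) {Φ Ψ : ℝ → P2 → P2}
    (hΦ : ContDiff ℝ ∞ (fun q : ℝ × P2 => Φ q.1 q.2))
    (hΨ : ContDiff ℝ ∞ (fun q : ℝ × P2 => Ψ q.1 q.2))
    (hl : ∀ t x, Ψ t (Φ t x) = x) (hr : ∀ t x, Φ t (Ψ t x) = x)
    (hΦm : ∀ t, MapsTo (Φ t) Disc Disc) (hΨm : ∀ t, MapsTo (Ψ t) Disc Disc)
    (hdet : ∀ t, ∀ x, (fderiv ℝ (Φ t) x).det = 1)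
    (h0 : ∀ x, Φ 0 x = x) (h1 : ∀ x ∈ Disc, f₀.toFun x = Φ 1 x) :
    (∀ (r : ℕ) (ε : ℝ), 0 < ε →
      ∃ n : ℕ, 1 ≤ n ∧ ∃ g : Fin n → DiscDiffeo ⊤,
        (∀ i, (g i).AreaPreserving) ∧
        (∀ i, crDist r (g i).toFun id < ENNReal.ofReal ε) ∧
        ∀ x ∈ Disc, f₀.toFun x = seqComp (fun i => (g i).toFun) x) ∧
    (∀ k : ℕ, ∃ C : ℝ, 0 < C ∧ ∀ n : ℕ, 1 ≤ n →
      ∃ g : Fin n → DiscDiffeo ⊤,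
        (∀ i, (g i).AreaPreserving) ∧
        (∀ i, crDist k (g i).toFun id ≤ ENNReal.ofReal (C / n)) ∧
        ∀ x ∈ Disc, f₀.toFun x = seqComp (fun i => (g i).toFun) x) := by
  have hΦs : ∀ t, ContDiff ℝ ∞ (Φ t) := fun t =>
    hΦ.comp (by fun_prop : ContDiff ℝ ∞ (fun x : P2 => (t, x)))
  have hΨs : ∀ t, ContDiff ℝ ∞ (Ψ t) := fun t =>
    hΨ.comp (by fun_prop : ContDiff ℝ ∞ (fun x : P2 => (t, x)))
  have main : ∀ k : ℕ, ∃ C : ℝ, 0 < C ∧ ∀ n : ℕ, 1 ≤ n →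
      ∃ g : Fin n → DiscDiffeo ⊤,
        (∀ i, (g i).AreaPreserving) ∧
        (∀ i, crDist k (g i).toFun id ≤ ENNReal.ofReal (C / n)) ∧
        ∀ x ∈ Disc, f₀.toFun x = seqComp (fun i => (g i).toFun) x := by
    intro k
    obtain ⟨C, hC, h⟩ := crDist_increment hΦ hΨ hr k
    refine ⟨C, hC, fun n hn => ?_⟩
    have hn' : (0:ℝ) < n := by exact_mod_cast hn
    refine ⟨fun i => mkDiffeo (Φ ((i + 1 : ℕ) / n) ∘ Ψ ((i : ℕ) / n))
      (Φ ((i : ℕ) / n) ∘ Ψ ((i + 1 : ℕ) / n)) ((hΦs _).comp (hΨs _)) ((hΦs _).comp (hΨs _))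
      ((hΦm _).comp (hΨm _)) ((hΦm _).comp (hΨm _)) (fun x => by simp [hl, hr])
      (fun x => by simp [hl, hr]), ?_, ?_, ?_⟩
    · intro i x hx
      change (fderivWithin ℝ (Φ ((i + 1 : ℕ) / n) ∘ Ψ ((i : ℕ) / n)) Disc x).det = 1
      have hd : ∀ t y, DifferentiableAt ℝ (Φ t) y := fun t y =>
        (hΦs t).differentiable (by simp) y
      have hd' : ∀ t y, DifferentiableAt ℝ (Ψ t) y := fun t y =>
        (hΨs t).differentiable (by simp) y
      have hdΨ : ∀ t, (fderiv ℝ (Ψ t) x).det = 1 := by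
        intro t
        have h2 : fderiv ℝ (Φ t ∘ Ψ t) x = ContinuousLinearMap.id ℝ P2 := by
          have : Φ t ∘ Ψ t = id := by ext y : 1; exact hr t y
          rw [this, fderiv_id]
        rw [fderiv_comp x (hd _ _) (hd' _ _)] at h2
        have h3 := congrArg ContinuousLinearMap.det h2
        rw [ContinuousLinearMap.det, ContinuousLinearMap.toLinearMap_comp, LinearMap.det_comp] at h3
        have h4 := hdet t (Ψ t x)
        rw [ContinuousLinearMap.det] at h4
        rw [h4, one_mul] at h3
        rw [ContinuousLinearMap.det, h3]
        simp [ContinuousLinearMap.det]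
      rw [fderivWithin_eq_fderiv (disc_uniqueDiffOn x hx) ((hd _ _).comp x (hd' _ _)),
        fderiv_comp x (hd _ _) (hd' _ _), ContinuousLinearMap.det,
        ContinuousLinearMap.toLinearMap_comp, LinearMap.det_comp]
      have h4 := hdet ((i + 1 : ℕ) / n) (Ψ ((i : ℕ) / n) x)
      have h5 := hdΨ ((i : ℕ) / n)
      rw [ContinuousLinearMap.det] at h4 h5
      rw [h4, h5, one_mul]
    · intro i
      have e : ((i + 1 : ℕ) : ℝ) / n = (i : ℕ) / n + 1 / n := by push_cast; ring
      have hi : ((i : ℕ) : ℝ) ≤ n := by exact_mod_cast i.2.le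
      have := h ((i : ℕ) / n) (1 / n) ⟨by positivity, (div_le_one hn').2 hi⟩
        ⟨by positivity, (div_le_one hn').2 (by exact_mod_cast hn)⟩
      rw [← e, mul_one_div] at this
      exact this
    · intro x hx
      rw [h1 x hx]
      have := seqComp_telescope Φ Ψ hl (fun i => (i : ℝ) / n) (by simpa using h0) n x
      simp only [div_self hn'.ne'] at this
      rw [← this]
      rfl
  refine ⟨fun r ε hε => ?_, main⟩
  obtain ⟨C, hC, h⟩ := main r
  obtain ⟨n, hn⟩ := exists_nat_gt (C / ε)
  have hn0 : (0:ℝ) < n := (div_pos hC hε).trans hn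
  have hn1 : 1 ≤ n := by exact_mod_cast hn0
  obtain ⟨g, hg1, hg2, hg3⟩ := h n hn1
  refine ⟨n, hn1, g, hg1, fun i => (hg2 i).trans_lt ?_, hg3⟩
  rw [ENNReal.ofReal_lt_ofReal_iff hε, div_lt_iff₀ hn0]
  rwa [div_lt_iff₀ hε, mul_comm] at hn

/-! ### Knothe rearrangement and area preserving correction -/

theorem det_prod_eq (A : P2 →L[ℝ] P2) :
    A.det = (A (1, 0)).1 * (A (0, 1)).2 - (A (0, 1)).1 * (A (1, 0)).2 := by
  rw [ContinuousLinearMap.det, ← LinearMap.det_toMatrix (Module.Basis.finTwoProd ℝ), Matrix.det_fin_two]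
  simp [LinearMap.toMatrix_apply]

theorem det_comp_eq (A B : P2 →L[ℝ] P2) : (A.comp B).det = A.det * B.det :=
  LinearMap.det_comp _ _

theorem contDiff_det_fderiv {G : ℝ → P2 → P2} (hG : ContDiff ℝ ∞ (fun q : ℝ × P2 => G q.1 q.2)) :
    ContDiff ℝ ∞ (fun q : ℝ × P2 => (fderiv ℝ (G q.1) q.2).det) := by
  have h : ContDiff ℝ ∞ (fun q : ℝ × P2 => fderiv ℝ (G q.1) q.2) := by
    refine ContDiff.fderiv (m := ∞) (n := ∞) (f := fun q : ℝ × P2 => G q.1) ?_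
        contDiff_snd (by simp)
    exact hG.comp (by fun_prop : ContDiff ℝ ∞ (fun r : (ℝ × P2) × P2 => (r.1.1, r.2)))
  simp only [det_prod_eq]
  have h1 : ∀ v : P2, ContDiff ℝ ∞ (fun q : ℝ × P2 => fderiv ℝ (G q.1) q.2 v) := fun v =>
    h.clm_apply contDiff_const
  exact ((h1 _).fst.mul (h1 _).snd).sub ((h1 _).fst.mul (h1 _).snd)

theorem det_ne_zero_of_injective (A : P2 →L[ℝ] P2) (h : ∀ v, A v = 0 → v = 0) : A.det ≠ 0 := by
  intro h0
  obtain ⟨v, hv, hv0⟩ := (Submodule.ne_bot_iff _).1 (LinearMap.bot_lt_ker_of_det_eq_zero h0).ne'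
  exact hv0 (h v hv)

theorem injective_of_det_ne_zero {E : Type*} [NormedAddCommGroup E] [NormedSpace ℝ E]
    [FiniteDimensional ℝ E] (A : E →L[ℝ] E) (h : A.det ≠ 0) : ∀ v, A v = 0 → v = 0 := by
  intro v hv
  exact (LinearMap.equivOfDetNeZero (A : E →ₗ[ℝ] E) h).injective
    (a₁ := v) (a₂ := 0) (by rw [map_zero]; exact hv)

theorem disc_eq : Disc = Icc (-1:ℝ) 1 ×ˢ Icc (-1:ℝ) 1 := by
  ext ⟨x, y⟩
  simp [Disc, Prod.norm_def, abs_le]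
  tauto

theorem setIntegral_disc (h : P2 → ℝ) (hh : Continuous h) :
    ∫ z in Disc, h z = ∫ x in (-1:ℝ)..1, ∫ y in (-1:ℝ)..1, h (x, y) := by
  have hi : IntegrableOn h Disc := hh.continuousOn.integrableOn_compact disc_compact
  rw [disc_eq, Measure.volume_eq_prod] at *
  rw [setIntegral_prod _ hi, intervalIntegral.integral_of_le (by norm_num), integral_Icc_eq_integral_Ioc]
  simp_rw [intervalIntegral.integral_of_le (show (-1:ℝ) ≤ 1 by norm_num), integral_Icc_eq_integral_Ioc]

/-- The Jacobian of a diffeomorphism of the square has total mass equal to the area. -/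
theorem integral_det_eq_four {G : P2 → P2} (hG : ContDiff ℝ ∞ G) (hb : Function.Bijective G)
    (hR : ∀ x, 1 ≤ ‖x‖ → G x = x) (hpos : ∀ x, 0 < (fderiv ℝ G x).det)
    (hc : Continuous fun x => (fderiv ℝ G x).det) :
    ∫ x in (-1:ℝ)..1, ∫ y in (-1:ℝ)..1, (fderiv ℝ G (x, y)).det = 4 := by
  have himg : G '' Disc = Disc := by
    refine Subset.antisymm ?_ ?_
    · rintro _ ⟨x, hx, rfl⟩
      by_contra h
      have h1 : 1 < ‖G x‖ := by simpa [Disc] using h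
      have := hb.1 (hR _ h1.le)
      rw [this] at h
      exact h hx
    · intro y hy
      obtain ⟨x, rfl⟩ := hb.2 y
      by_contra h
      have h1 : x ∉ Disc := fun hx => h ⟨x, hx, rfl⟩
      have h2 : 1 < ‖x‖ := by simpa [Disc] using h1
      rw [hR x h2.le] at hy
      exact h1 hy
  have h1 := integral_image_eq_integral_abs_det_fderiv_smul (volume : Measure P2)
    disc_compact.measurableSet (f := G) (f' := fderiv ℝ G)
    (fun x _ => ((hG.differentiable (by simp) x).hasFDerivAt).hasFDerivWithinAt) hb.1.injOn
    (fun _ => (1:ℝ))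
  rw [himg] at h1
  simp only [smul_eq_mul, mul_one, abs_of_pos (hpos _)] at h1
  rw [setIntegral_disc _ hc, setIntegral_disc _ continuous_const] at h1
  rw [← h1]
  norm_num

/-- The Knothe rearrangement: the triangular map of the plane whose Jacobian is a prescribed
density of total mass `4` on the square, equal to `1` outside. -/
theorem exists_knothe {ρ : ℝ → P2 → ℝ} (hρ : ContDiff ℝ ∞ (fun q : ℝ × P2 => ρ q.1 q.2))
    (hpos : ∀ t x, 0 < ρ t x) (h1 : ∀ t x, 1 ≤ ‖x‖ → ρ t x = 1)
    (hm : ∀ t, ∫ x in (-1:ℝ)..1, ∫ y in (-1:ℝ)..1, ρ t (x, y) = 4) :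
    ∃ K : ℝ → P2 → P2, ContDiff ℝ ∞ (fun q : ℝ × P2 => K q.1 q.2) ∧
      (∀ t x, (fderiv ℝ (K t) x).det = ρ t x) ∧ (∀ t, Function.Bijective (K t)) ∧
      (∀ t x, K t x ∈ Disc ↔ x ∈ Disc) ∧ ∀ t, (∀ x, ρ t x = 1) → ∀ x, K t x = x := by
  set m : ℝ → ℝ → ℝ := fun t x => ∫ y in (-1:ℝ)..1, ρ t (x, y) with hmdef
  set I : ℝ → ℝ → ℝ → ℝ := fun t x y => ∫ s in (-1:ℝ)..y, ρ t (x, s) with hIdef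
  set J : ℝ → ℝ → ℝ := fun t x => ∫ s in (-1:ℝ)..x, m t s with hJdef
  have hρy : ∀ t x, Continuous fun y => ρ t (x, y) := fun t x =>
    hρ.continuous.comp (by fun_prop : Continuous fun y : ℝ => (t, (x, y)))
  have hmS : ContDiff ℝ ∞ (fun q : ℝ × ℝ => m q.1 q.2) :=
    contDiff_intervalIntegral (-1) 1 (fun (p : ℝ × ℝ) s => ρ p.1 (p.2, s))
      (hρ.comp (by fun_prop : ContDiff ℝ ∞ fun q : (ℝ × ℝ) × ℝ => (q.1.1, (q.1.2, q.2))))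
  have hJS : ContDiff ℝ ∞ (fun q : ℝ × ℝ => J q.1 q.2) :=
    contDiff_intervalIntegral_right (-1) (fun t s => m t s) hmS
  have hIS : ContDiff ℝ ∞ (fun q : (ℝ × ℝ) × ℝ => I q.1.1 q.1.2 q.2) :=
    contDiff_intervalIntegral_right (-1) (fun (p : ℝ × ℝ) s => ρ p.1 (p.2, s))
      (hρ.comp (by fun_prop : ContDiff ℝ ∞ fun q : (ℝ × ℝ) × ℝ => (q.1.1, (q.1.2, q.2))))
  have hmc : ∀ t, Continuous (m t) := fun t =>
    hmS.continuous.comp (by fun_prop : Continuous fun y : ℝ => (t, y))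
  have hmpos : ∀ t x, 0 < m t x := fun t x =>
    intervalIntegral.intervalIntegral_pos_of_pos ((hρy t x).intervalIntegrable _ _)
      (fun y => hpos _ _) (by norm_num)
  have hm2 : ∀ t x, 1 ≤ |x| → m t x = 2 := by
    intro t x hx
    have : ∀ y, ρ t (x, y) = 1 := fun y => h1 t _ (by
      rw [Prod.norm_def]; exact le_max_of_le_left hx)
    simp [hmdef, this]; norm_num
  have hId : ∀ t x y, HasDerivAt (I t x) (ρ t (x, y)) y := fun t x y =>
    intervalIntegral.integral_hasDerivAt_right ((hρy t x).intervalIntegrable _ _)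
      ((hρy t x).stronglyMeasurableAtFilter _ _) (hρy t x).continuousAt
  have hJd : ∀ t x, HasDerivAt (J t) (m t x) x := fun t x =>
    intervalIntegral.integral_hasDerivAt_right ((hmc t).intervalIntegrable _ _)
      ((hmc t).stronglyMeasurableAtFilter _ _) (hmc t).continuousAt
  have hImono : ∀ t x, StrictMono (I t x) := fun t x =>
    strictMono_of_hasDerivAt_pos (hId t x) fun y => hpos _ _
  have hJmono : ∀ t, StrictMono (J t) := fun t =>
    strictMono_of_hasDerivAt_pos (hJd t) fun y => hmpos _ _
  have hIm : ∀ t x, I t x (-1) = 0 := fun t x => by simp [hIdef]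
  have hI1 : ∀ t x, I t x 1 = m t x := fun t x => rfl
  have hJm : ∀ t, J t (-1) = 0 := fun t => by simp [hJdef]
  have hJ1 : ∀ t, J t 1 = 4 := hm
  -- beyond the square both primitives are affine
  have hIout : ∀ t x y, 1 ≤ y → I t x y = m t x + (y - 1) := by
    intro t x y hy
    have e : I t x y = I t x 1 + ∫ s in (1:ℝ)..y, ρ t (x, s) :=
      (intervalIntegral.integral_add_adjacent_intervals ((hρy t x).intervalIntegrable _ _)
        ((hρy t x).intervalIntegrable _ _)).symm
    rw [e, hI1]
    congr 1
    rw [intervalIntegral.integral_congr (g := fun _ => (1:ℝ))]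
    · simp
    · intro s hs
      rw [uIcc_of_le hy] at hs
      exact h1 t _ (by rw [Prod.norm_def]; exact le_max_of_le_right (hs.1.trans (le_abs_self _)))
  have hIout' : ∀ t x y, y ≤ -1 → I t x y = y + 1 := by
    intro t x y hy
    change ∫ s in (-1:ℝ)..y, ρ t (x, s) = _
    rw [intervalIntegral.integral_congr (g := fun _ => (1:ℝ))]
    · simp
    · intro s hs
      rw [uIcc_of_ge hy] at hs
      exact h1 t _ (by
        rw [Prod.norm_def]; exact le_max_of_le_right (le_trans (by linarith [hs.2]) (neg_le_abs _)))
  have hJout : ∀ t x, 1 ≤ x → J t x = 4 + 2 * (x - 1) := by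
    intro t x hx
    have e : J t x = J t 1 + ∫ s in (1:ℝ)..x, m t s :=
      (intervalIntegral.integral_add_adjacent_intervals ((hmc t).intervalIntegrable _ _)
        ((hmc t).intervalIntegrable _ _)).symm
    rw [e, hJ1]
    congr 1
    rw [intervalIntegral.integral_congr (g := fun _ => (2:ℝ))]
    · simp; ring
    · intro s hs
      rw [uIcc_of_le hx] at hs
      exact hm2 t _ (hs.1.trans (le_abs_self _))
  have hJout' : ∀ t x, x ≤ -1 → J t x = 2 * (x + 1) := by
    intro t x hx
    change ∫ s in (-1:ℝ)..x, m t s = _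
    rw [intervalIntegral.integral_congr (g := fun _ => (2:ℝ))]
    · simp; ring
    · intro s hs
      rw [uIcc_of_ge hx] at hs
      exact hm2 t _ (le_trans (by linarith [hs.2]) (neg_le_abs _))
  have hIsurj : ∀ t x, Function.Surjective (I t x) := by
    intro t x
    refine Continuous.surjective (continuous_iff_continuousAt.2 fun y => (hId t x y).continuousAt) ?_ ?_
    · refine Tendsto.congr' (f₁ := fun y => m t x + (y - 1)) ?_ ?_
      · filter_upwards [eventually_ge_atTop 1] with y hy using (hIout t x y hy).symm
      · exact tendsto_atTop_add_const_left _ _ (tendsto_atTop_add_const_right _ _ tendsto_id)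
    · refine Tendsto.congr' (f₁ := fun y => y + 1) ?_ ?_
      · filter_upwards [eventually_le_atBot (-1)] with y hy using (hIout' t x y hy).symm
      · exact tendsto_atBot_add_const_right _ _ tendsto_id
  have hJsurj : ∀ t, Function.Surjective (J t) := by
    intro t
    refine Continuous.surjective (continuous_iff_continuousAt.2 fun y => (hJd t y).continuousAt) ?_ ?_
    · refine Tendsto.congr' (f₁ := fun y => 4 + 2 * (y - 1)) ?_ ?_
      · filter_upwards [eventually_ge_atTop 1] with y hy using (hJout t y hy).symm
      · exact tendsto_atTop_add_const_left _ _ (Tendsto.const_mul_atTop two_pos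
          (tendsto_atTop_add_const_right _ _ tendsto_id))
    · refine Tendsto.congr' (f₁ := fun y => 2 * (y + 1)) ?_ ?_
      · filter_upwards [eventually_le_atBot (-1)] with y hy using (hJout' t y hy).symm
      · exact Tendsto.const_mul_atBot two_pos (tendsto_atBot_add_const_right _ _ tendsto_id)
  -- the first coordinate normalises the mass of vertical strips, the second one the conditional
  -- mass along each vertical segment
  set K : ℝ → P2 → P2 := fun t p => (-1 + J t p.1 / 2, -1 + 2 * I t p.1 p.2 / m t p.1) with hK
  have hKS : ContDiff ℝ ∞ (fun q : ℝ × P2 => K q.1 q.2) := by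
    have e1 : ContDiff ℝ ∞ (fun q : ℝ × P2 => J q.1 q.2.1) :=
      hJS.comp (by fun_prop : ContDiff ℝ ∞ fun q : ℝ × P2 => (q.1, q.2.1))
    have e2 : ContDiff ℝ ∞ (fun q : ℝ × P2 => m q.1 q.2.1) :=
      hmS.comp (by fun_prop : ContDiff ℝ ∞ fun q : ℝ × P2 => (q.1, q.2.1))
    have e3 : ContDiff ℝ ∞ (fun q : ℝ × P2 => I q.1 q.2.1 q.2.2) :=
      hIS.comp (by fun_prop : ContDiff ℝ ∞ fun q : ℝ × P2 => ((q.1, q.2.1), q.2.2))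
    exact (contDiff_const.add (e1.div_const 2)).prodMk
      (contDiff_const.add ((contDiff_const.mul e3).div e2 fun q => (hmpos _ _).ne'))
  refine ⟨K, hKS, ?_, ?_, ?_, ?_⟩
  · rintro t ⟨x, y⟩
    have hd : HasFDerivAt (K t) (fderiv ℝ (K t) (x, y)) (x, y) :=
      ((hKS.comp (by fun_prop : ContDiff ℝ ∞ (fun p : P2 => (t, p)))).differentiable
        (by simp) (x, y)).hasFDerivAt
    have d1 : HasDerivAt (fun s => K t (s, y)) (fderiv ℝ (K t) (x, y) (1, 0)) x :=
      hd.comp_hasDerivAt (f := fun s => (s, y)) x ((hasDerivAt_id x).prodMk (hasDerivAt_const x y))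
    have d2 : HasDerivAt (fun s => K t (x, s)) (fderiv ℝ (K t) (x, y) (0, 1)) y :=
      hd.comp_hasDerivAt (f := fun s => (x, s)) y ((hasDerivAt_const y x).prodMk (hasDerivAt_id y))
    have d1' : HasDerivAt (fun s => (K t (s, y)).1) (fderiv ℝ (K t) (x, y) (1, 0)).1 x :=
      (ContinuousLinearMap.fst ℝ ℝ ℝ).hasFDerivAt.comp_hasDerivAt x d1
    have d2' : HasDerivAt (fun s => (K t (x, s)).1) (fderiv ℝ (K t) (x, y) (0, 1)).1 y :=
      (ContinuousLinearMap.fst ℝ ℝ ℝ).hasFDerivAt.comp_hasDerivAt y d2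
    have d3' : HasDerivAt (fun s => (K t (x, s)).2) (fderiv ℝ (K t) (x, y) (0, 1)).2 y :=
      (ContinuousLinearMap.snd ℝ ℝ ℝ).hasFDerivAt.comp_hasDerivAt y d2
    have e1 := d1'.unique (((hJd t x).div_const 2).const_add (-1))
    have e2 := d2'.unique (hasDerivAt_const y (-1 + J t x / 2))
    have e3 := d3'.unique ((((hId t x y).const_mul 2).div_const (m t x)).const_add (-1))
    rw [det_prod_eq, e1, e2, e3]
    have := (hmpos t x).ne'
    field_simp
    ring
  · intro t
    constructor
    · rintro ⟨x, y⟩ ⟨x', y'⟩ h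
      simp only [hK, Prod.mk.injEq] at h
      have hx : x = x' := (hJmono t).injective (by linarith [h.1])
      subst hx
      have hm0 := (hmpos t x).ne'
      have hy : I t x y = I t x y' := by
        have := h.2
        field_simp at this
        linarith
      rw [(hImono t x).injective hy]
    · rintro ⟨u, v⟩
      obtain ⟨x, hx⟩ := hJsurj t (2 * (u + 1))
      obtain ⟨y, hy⟩ := hIsurj t x (m t x * (v + 1) / 2)
      refine ⟨(x, y), ?_⟩
      have hm0 := (hmpos t x).ne'
      simp only [hK, hx, hy, Prod.mk.injEq]
      constructor
      · ring
      · field_simp; ring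
  · rintro t ⟨x, y⟩
    have hm0 := hmpos t x
    simp only [hK, disc_eq, mem_prod, mem_Icc]
    have a1 : -1 ≤ -1 + J t x / 2 ↔ -1 ≤ x := by
      rw [← (hJmono t).le_iff_le (a := -1) (b := x), hJm]; constructor <;> intro h <;> linarith
    have a2 : -1 + J t x / 2 ≤ 1 ↔ x ≤ 1 := by
      rw [← (hJmono t).le_iff_le (a := x) (b := 1), hJ1]; constructor <;> intro h <;> linarith
    have a3 : -1 ≤ -1 + 2 * I t x y / m t x ↔ -1 ≤ y := by
      rw [← (hImono t x).le_iff_le (a := -1) (b := y), hIm, le_add_iff_nonneg_right, le_div_iff₀ hm0]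
      constructor <;> intro h <;> linarith
    have a4 : -1 + 2 * I t x y / m t x ≤ 1 ↔ y ≤ 1 := by
      rw [← (hImono t x).le_iff_le (a := y) (b := 1), hI1, ← le_sub_iff_add_le', div_le_iff₀ hm0]
      constructor <;> intro h <;> linarith
    rw [a1, a2, a3, a4]
  · rintro t h ⟨x, y⟩
    have em : ∀ x, m t x = 2 := fun x => by simp [hmdef, h]; norm_num
    have eI : I t x y = y + 1 := by simp [hIdef, h]
    have eJ : J t x = 2 * (x + 1) := by simp [hJdef, em]; ring
    simp only [hK, em, eI, eJ, Prod.mk.injEq]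
    constructor <;> ring

/-- Moser-type correction: a smooth path of diffeomorphisms, supported in the square, from the
identity to an area preserving map can be replaced by a path of area preserving maps. -/
theorem exists_area_preserving_path {G : ℝ → P2 → P2}
    (hG : ContDiff ℝ ∞ (fun q : ℝ × P2 => G q.1 q.2))
    (hi : ∀ t x v, fderiv ℝ (G t) x v = 0 → v = 0) (hR : ∀ t x, 1 ≤ ‖x‖ → G t x = x)
    (h0 : ∀ x, G 0 x = x) (h1 : ∀ x, (fderiv ℝ (G 1) x).det = 1) :
    ∃ Φ Ψ : ℝ → P2 → P2, ContDiff ℝ ∞ (fun q : ℝ × P2 => Φ q.1 q.2) ∧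
      ContDiff ℝ ∞ (fun q : ℝ × P2 => Ψ q.1 q.2) ∧
      (∀ t x, Ψ t (Φ t x) = x) ∧ (∀ t x, Φ t (Ψ t x) = x) ∧
      (∀ t, MapsTo (Φ t) Disc Disc) ∧ (∀ t, MapsTo (Ψ t) Disc Disc) ∧
      (∀ t, ∀ x, (fderiv ℝ (Φ t) x).det = 1) ∧ (∀ x, Φ 0 x = x) ∧ ∀ x, Φ 1 x = G 1 x := by
  have hGs : ∀ t, ContDiff ℝ ∞ (G t) := fun t =>
    hG.comp (by fun_prop : ContDiff ℝ ∞ (fun x : P2 => (t, x)))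
  have hGb : ∀ t, Function.Bijective (G t) := fun t =>
    bijective_of_injective_fderiv (hGs t) (hi t) 1 (hR t)
  have hρ := contDiff_det_fderiv hG
  -- the Jacobian is `1` outside the open square, by continuity on the boundary
  have hρ1' : ∀ t x, 1 < ‖x‖ → (fderiv ℝ (G t) x).det = 1 := by
    intro t x hx
    have : G t =ᶠ[𝓝 x] id := by
      filter_upwards [(isOpen_lt continuous_const continuous_norm).mem_nhds hx] with y hy
        using hR t y (le_of_lt hy)
    rw [this.fderiv_eq, fderiv_id]
    simp [ContinuousLinearMap.det]
  have hρc : ∀ t, Continuous fun x => (fderiv ℝ (G t) x).det := fun t =>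
    hρ.continuous.comp (by fun_prop : Continuous fun x : P2 => (t, x))
  have hρ1 : ∀ t x, 1 ≤ ‖x‖ → (fderiv ℝ (G t) x).det = 1 := by
    intro t x hx
    have hl : Tendsto (fun s : ℝ => (fderiv ℝ (G t) (s • x)).det) (𝓝[>] 1)
        (𝓝 (fderiv ℝ (G t) ((1:ℝ) • x)).det) :=
      (((hρc t).comp (by fun_prop : Continuous fun s : ℝ => s • x)).tendsto 1).mono_left
        nhdsWithin_le_nhds
    rw [one_smul] at hl
    refine tendsto_nhds_unique hl (tendsto_const_nhds.congr' ?_)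
    filter_upwards [self_mem_nhdsWithin] with s hs
    have hs' : 1 < s := hs
    refine (hρ1' t _ ?_).symm
    rw [norm_smul, Real.norm_of_nonneg (by linarith)]
    nlinarith
  have hρne : ∀ q : ℝ × P2, (fderiv ℝ (G q.1) q.2).det ≠ 0 := fun q =>
    det_ne_zero_of_injective _ (hi _ _)
  have hρpos : ∀ t x, 0 < (fderiv ℝ (G t) x).det := by
    intro t x
    by_contra h
    obtain ⟨q, hq⟩ := mem_range_of_exists_le_of_exists_ge (c := 0) hρ.continuous
      ⟨(t, x), not_lt.1 h⟩ ⟨(0, (2, 2)), by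
        simp only; rw [hρ1 0 _ (by simp [Prod.norm_def])]; exact zero_le_one⟩
    exact hρne q hq
  obtain ⟨K, hK, hKd, hKb, hKm, hKid⟩ := exists_knothe (ρ := fun t x => (fderiv ℝ (G t) x).det) hρ hρpos hρ1
    (fun t => integral_det_eq_four (hGs t) (hGb t) (hR t) (hρpos t) (hρc t))
  have hKi : ∀ t x v, fderiv ℝ (K t) x v = 0 → v = 0 := fun t x =>
    injective_of_det_ne_zero _ (by rw [hKd]; exact (hρpos t x).ne')
  obtain ⟨L, hL, hLK, hKL⟩ := exists_smooth_inverse_family hK hKi hKb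
  obtain ⟨H, hH, hHG, hGH⟩ := exists_smooth_inverse_family hG hi hGb
  have hGm : ∀ t x, G t x ∈ Disc ↔ x ∈ Disc := by
    intro t x
    by_cases hx : 1 ≤ ‖x‖
    · rw [hR t x hx]
    · have hx1 : x ∈ Disc := by simpa [Disc] using (not_le.1 hx).le
      refine iff_of_true ?_ hx1
      by_contra h
      have h2 : 1 < ‖G t x‖ := by simpa [Disc] using h
      have h3 := (hGb t).1 (hR t _ h2.le)
      rw [h3] at h2
      exact hx h2.le
  have hKs : ∀ t, ContDiff ℝ ∞ (K t) := fun t =>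
    hK.comp (by fun_prop : ContDiff ℝ ∞ (fun x : P2 => (t, x)))
  have hLs : ∀ t, ContDiff ℝ ∞ (L t) := fun t =>
    hL.comp (by fun_prop : ContDiff ℝ ∞ (fun x : P2 => (t, x)))
  have hLm : ∀ t, MapsTo (L t) Disc Disc := fun t x hx => by
    rw [← hKm t, hKL]; exact hx
  have hHm : ∀ t, MapsTo (H t) Disc Disc := fun t x hx => by
    rw [← hGm t, hGH]; exact hx
  refine ⟨fun t x => G t (L t x), fun t x => K t (H t x), hG.comp (contDiff_fst.prodMk hL),
    hK.comp (contDiff_fst.prodMk hH), fun t x => by simp only [hHG, hKL],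
    fun t x => by simp only [hLK, hGH], fun t x hx => (hGm _ _).2 (hLm t hx),
    fun t x hx => (hKm _ _).2 (hHm t hx), ?_, ?_, ?_⟩
  · intro t x
    have hc : (fun y => (G t (L t (K t y)))) = G t := by ext1 y; rw [hLK]
    have hd : HasFDerivAt (fun y => G t (L t y)) (fderiv ℝ (fun y => G t (L t y)) x) (K t (L t x)) := by
      rw [hKL]
      exact ((((hGs t).comp (hLs t)).differentiable (by simp)) x).hasFDerivAt
    have hd2 := hd.comp (L t x) (((hKs t).differentiable (by simp)) (L t x)).hasFDerivAt
    have e : (fun y => G t (L t y)) ∘ K t = G t := hc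
    rw [e] at hd2
    have hdet := congrArg ContinuousLinearMap.det hd2.fderiv
    have hk := hKd t (L t x)
    have hp := hρpos t (L t x)
    rw [hdet] at hk hp
    rw [det_comp_eq] at hk hp
    have h5 : (fderiv ℝ (K t) (L t x)).det ≠ 0 :=
      fun h => by rw [h, mul_zero] at hp; exact lt_irrefl _ hp
    exact mul_right_cancel₀ h5 (by rw [one_mul]; exact hk.symm)
  · intro x
    have e : ∀ y, K 0 y = y := hKid 0 fun y => by
      have : G 0 = id := funext h0
      simp [this, ContinuousLinearMap.det]
    simp only [h0]
    rw [← e (L 0 x), hKL]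
  · intro x
    have e : ∀ y, K 1 y = y := hKid 1 h1
    simp only
    congr 1
    rw [← e (L 1 x), hKL]

/-! ### Curves following a direction field -/

/-- A continuous function avoiding `2πℤ` stays between two consecutive multiples of `2π`. -/
theorem same_period {f : ℝ → ℝ} {s t : ℝ} (hst : s ≤ t) (hf : ContinuousOn f (Icc s t))
    (hne : ∀ a ∈ Icc s t, ∀ k : ℤ, f a ≠ 2 * Real.pi * k) :
    ∃ k : ℤ, (2 * Real.pi * k < f s ∧ f s < 2 * Real.pi * k + 2 * Real.pi) ∧
      (2 * Real.pi * k < f t ∧ f t < 2 * Real.pi * k + 2 * Real.pi) := by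
  have hpi := Real.pi_pos
  set k : ℤ := ⌊f s / (2 * Real.pi)⌋
  have h1 : (k : ℝ) ≤ f s / (2 * Real.pi) := Int.floor_le _
  have h2 : f s / (2 * Real.pi) < k + 1 := Int.lt_floor_add_one _
  rw [le_div_iff₀ (by positivity)] at h1
  rw [div_lt_iff₀ (by positivity)] at h2
  have h3 : 2 * Real.pi * k < f s :=
    lt_of_le_of_ne (by linarith) (hne s ⟨le_rfl, hst⟩ k).symm
  refine ⟨k, ⟨h3, by linarith⟩, ?_, ?_⟩
  · by_contra h
    obtain ⟨a, ha, hk⟩ := intermediate_value_Icc' hst hf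
      (show 2 * Real.pi * k ∈ Icc (f t) (f s) from ⟨not_lt.1 h, h3.le⟩)
    exact hne a ha k hk
  · by_contra h
    obtain ⟨a, ha, hk⟩ := intermediate_value_Icc hst hf
      (show 2 * Real.pi * k + 2 * Real.pi ∈ Icc (f s) (f t) from ⟨by linarith, not_lt.1 h⟩)
    exact hne a ha (k + 1) (by rw [hk]; push_cast; ring)

/-- First order condition at a point minimal among the nearby points on its right. -/
theorem deriv_nonneg_of_right {f : ℝ → ℝ} {f' x : ℝ} (h : HasDerivAt f f' x)
    (hm : ∀ᶠ y in 𝓝[>] (0:ℝ), f x ≤ f (x + y)) : 0 ≤ f' := by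
  refine ge_of_tendsto h.tendsto_slope_zero_right ?_
  filter_upwards [hm, self_mem_nhdsWithin] with y hy hy0
  have : (0:ℝ) < y := hy0
  rw [smul_eq_mul]
  exact mul_nonneg (by positivity) (by linarith)

theorem cos_im_eq (w : ℂ) : Real.cos w.im = (Complex.exp w).re / ‖Complex.exp w‖ := by
  rw [Complex.norm_exp, Complex.exp_re]
  field_simp

/-- An angle between two consecutive multiples of `2π` with nonpositive cosine is within `π / 2` of
the midpoint. -/
theorem arg_window {x : ℝ} {k : ℤ} (h1 : 2 * Real.pi * k < x) (h2 : x < 2 * Real.pi * k + 2 * Real.pi)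
    (hc : Real.cos x ≤ 0) : 2 * Real.pi * k + Real.pi / 2 ≤ x ∧
      x ≤ 2 * Real.pi * k + 3 * Real.pi / 2 := by
  have hpi := Real.pi_pos
  have e : Real.cos (x - k * (2 * Real.pi)) = Real.cos x := Real.cos_sub_int_mul_two_pi x k
  constructor
  · by_contra h
    have := Real.cos_pos_of_mem_Ioo (x := x - k * (2 * Real.pi)) ⟨by linarith, by linarith⟩
    linarith
  · by_contra h
    have e2 : Real.cos (x - k * (2 * Real.pi) - 2 * Real.pi) = Real.cos x := by
      rw [Real.cos_sub_two_pi, e]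
    have := Real.cos_pos_of_mem_Ioo (x := x - k * (2 * Real.pi) - 2 * Real.pi)
      ⟨by linarith, by linarith⟩
    linarith

/-- An angle within `π` of `2πk` whose cosine exceeds `1 / 2` is within `π / 3` of `2πk`. -/
theorem arg_window' {x : ℝ} {k : ℤ} (h1 : 2 * Real.pi * k < x + Real.pi)
    (h2 : x + Real.pi < 2 * Real.pi * k + 2 * Real.pi)
    (hc : 1 / 2 < Real.cos x) : |x - 2 * Real.pi * k| < Real.pi / 3 := by
  have hpi := Real.pi_pos
  have e : Real.cos |x - 2 * Real.pi * k| = Real.cos x := by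
    rw [Real.cos_abs, mul_comm]; exact Real.cos_sub_int_mul_two_pi x k
  by_contra h
  have h3 : |x - 2 * Real.pi * k| ≤ Real.pi := abs_le.2 ⟨by linarith, by linarith⟩
  have := Real.cos_le_cos_of_nonneg_of_le_pi (by positivity) h3 (not_lt.1 h)
  rw [e, Real.cos_pi_div_three] at this
  linarith

/-- An embedded curve which almost follows the direction field `exp ∘ U` on the plane never comes
close to itself again. At a closest return, the turning of the tangent along the arc, computed by
the secant homotopy as for the rotation index theorem, would be at least `π` in absolute value;
but it is the variation of `Im U` between two nearby points, up to a small error. -/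
theorem no_near_return {γ : ℝ → ℂ} (hγ : ContDiff ℝ ∞ γ) (hinj : Function.Injective γ)
    (hγ' : ∀ x, deriv γ x ≠ 0) {U : ℂ → ℂ} (hU : Continuous U) {A B τ η : ℝ} (hτ : 0 < τ)
    (hδ : ∀ x ∈ Icc A B, ‖deriv γ x / Complex.exp (U (γ x)) - 1‖ ≤ 1 / 4)
    (hloc : ∀ a ∈ Icc A B, ∀ b ∈ Icc A B, τ ≤ b - a → b - a ≤ 2 * τ → η < ‖γ b - γ a‖)
    (hη : ∀ p q, ‖p - q‖ ≤ η → |(U p).im - (U q).im| ≤ Real.pi / 3) :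
    ∀ a ∈ Icc A B, ∀ b ∈ Icc A B, τ ≤ b - a → η < ‖γ b - γ a‖ := by
  intro a₀ ha₀ b₀ hb₀ hab₀
  by_contra hcon
  have hpi := Real.pi_pos
  have hγc : Continuous γ := hγ.continuous
  have hγ1 : Continuous (deriv γ) := hγ.continuous_deriv (by simp)
  have hγd : ∀ x, HasDerivAt γ (deriv γ x) x := fun x => (hγ.differentiable (by simp) x).hasDerivAt
  set T : Set (ℝ × ℝ) := (Icc A B ×ˢ Icc A B) ∩ {p | τ ≤ p.2 - p.1} with hT
  have hTc : IsCompact T := (isCompact_Icc.prod isCompact_Icc).inter_right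
    (isClosed_le continuous_const (by fun_prop))
  obtain ⟨⟨s, t⟩, hst, hmin⟩ := hTc.exists_isMinOn ⟨(a₀, b₀), ⟨ha₀, hb₀⟩, hab₀⟩
    (f := fun p : ℝ × ℝ => ‖γ p.2 - γ p.1‖) (by fun_prop)
  have hmin' : ∀ a b, A ≤ a → b ≤ B → τ ≤ b - a → ‖γ t - γ s‖ ≤ ‖γ b - γ a‖ := fun a b ha hb hab =>
    hmin (show (a, b) ∈ T from ⟨⟨⟨ha, by linarith⟩, ⟨by linarith, hb⟩⟩, hab⟩)
  obtain ⟨⟨hs, ht⟩, hts⟩ := hst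
  simp only [mem_setOf_eq] at hs ht hts
  have hd : ‖γ t - γ s‖ ≤ η := (hmin' a₀ b₀ ha₀.1 hb₀.2 hab₀).trans (not_lt.1 hcon)
  have h2τ : 2 * τ < t - s := by
    by_contra h
    exact absurd (hloc s hs t ht hts (not_lt.1 h)) (not_lt.2 hd)
  have hst' : s < t := by linarith
  -- the secant map
  set S : ℝ × ℝ → ℂ := fun p => ∫ u in (0:ℝ)..1, deriv γ (p.1 + u * (p.2 - p.1)) with hS
  have hSc : Continuous S := by
    refine intervalIntegral.continuous_parametric_intervalIntegral_of_continuous' ?_ 0 1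
    exact hγ1.comp (by fun_prop)
  have hSe : ∀ a b, ((b - a : ℝ) : ℂ) * S (a, b) = γ b - γ a := by
    intro a b
    have h1 := intervalIntegral.smul_integral_comp_mul_add (deriv γ) (a := 0) (b := 1) (b - a) a
    have h2 : ∫ x in a..b, deriv γ x = γ b - γ a :=
      intervalIntegral.integral_eq_sub_of_hasDerivAt (fun x _ => hγd x) (hγ1.intervalIntegrable _ _)
    simp only [mul_zero, zero_add, mul_one, sub_add_cancel] at h1
    rw [h2] at h1
    rw [← h1, Complex.real_smul]
    congr 1
    refine intervalIntegral.integral_congr fun u _ => ?_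
    simp only
    congr 1
    ring
  have hSd : ∀ a, S (a, a) = deriv γ a := fun a => by simp [hS]
  have hS0 : ∀ p, S p ≠ 0 := by
    rintro ⟨a, b⟩ h
    by_cases hab : a = b
    · subst hab; rw [hSd] at h; exact hγ' _ h
    · have := hSe a b
      rw [h, mul_zero] at this
      exact hab (hinj (sub_eq_zero.1 this.symm)).symm
  obtain ⟨l, hl, hle⟩ := exists_continuous_log S hSc hS0
  have him : Continuous fun p => (l p).im := Complex.continuous_im.comp hl
  set q := γ t - γ s with hq
  have hq0 : q ≠ 0 := fun h => hst'.ne (hinj (sub_eq_zero.1 h)).symm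
  -- first order conditions at the closest return
  have hns : ∀ w : ℂ, ∀ f : ℝ → ℂ, ∀ x, HasDerivAt f w x →
      HasDerivAt (fun y => ‖f y‖ ^ 2) (2 * (f x * (starRingEnd ℂ) w).re) x := by
    intro w f x h
    have := h.norm_sq
    rw [real_inner_comm, Complex.inner] at this
    exact this
  have hfs : (q * (starRingEnd ℂ) (deriv γ s)).re ≤ 0 := by
    have h1 := hns _ _ s ((hγd s).const_sub (γ t))
    have h2 := deriv_nonneg_of_right h1 (by
      filter_upwards [Ioo_mem_nhdsGT hτ] with y hy
      gcongr
      exact hmin' _ _ (by linarith [hs.1, hy.1]) ht.2 (by linarith [hy.2]))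
    simp only [map_neg, mul_neg, Complex.neg_re] at h2
    linarith
  have hft : (q * (starRingEnd ℂ) (deriv γ t)).re ≤ 0 := by
    have h0 : HasDerivAt (fun y => γ (-y) - γ s) (-deriv γ t) (-t) := by
      have := (HasDerivAt.scomp (-t) (by rw [neg_neg]; exact hγd t) (hasDerivAt_neg (-t))).sub_const (γ s)
      simpa using this
    have h1 := hns _ _ (-t) h0
    have h2 := deriv_nonneg_of_right h1 (by
      filter_upwards [Ioo_mem_nhdsGT hτ] with y hy
      rw [neg_neg]
      gcongr
      exact hmin' _ _ hs.1 (by linarith [ht.2, hy.1]) (by linarith [hy.2]))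
    simp only [map_neg, mul_neg, Complex.neg_re, neg_neg] at h2
    linarith
  -- the angle between the two secants
  set D : ℝ → ℝ := fun a => (l (a, t)).im - (l (s, a)).im with hD
  have hexpD : ∀ a, Complex.exp (l (a, t) - l (s, a)) = S (a, t) / S (s, a) := fun a => by
    rw [Complex.exp_sub, hle, hle]
  have hSst : S (s, t) = q / ((t - s : ℝ) : ℂ) := by
    rw [eq_div_iff (by exact_mod_cast (sub_pos.2 hst').ne'), mul_comm, hSe]
  have hDs : Real.cos (D s) ≤ 0 := by
    have h1 := cos_im_eq (l (s, t) - l (s, s))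
    rw [Complex.sub_im, hexpD, hSd, hSst] at h1
    change Real.cos ((l (s, t)).im - (l (s, s)).im) ≤ 0
    rw [h1]
    refine div_nonpos_of_nonpos_of_nonneg ?_ (norm_nonneg _)
    have : q / ((t - s : ℝ) : ℂ) / deriv γ s =
        ((((t - s) * Complex.normSq (deriv γ s))⁻¹ : ℝ) : ℂ) * (q * (starRingEnd ℂ) (deriv γ s)) := by
      rw [div_eq_mul_inv _ (deriv γ s), Complex.inv_def]
      push_cast
      field_simp
    rw [this, Complex.re_ofReal_mul]
    exact mul_nonpos_of_nonneg_of_nonpos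
      (inv_nonneg.2 (mul_nonneg (by linarith) (Complex.normSq_nonneg _))) hfs
  have hDt : Real.cos (D t) ≤ 0 := by
    have h1 := cos_im_eq (l (t, t) - l (s, t))
    rw [Complex.sub_im, hexpD, hSd, hSst] at h1
    change Real.cos ((l (t, t)).im - (l (s, t)).im) ≤ 0
    rw [h1]
    refine div_nonpos_of_nonpos_of_nonneg ?_ (norm_nonneg _)
    have : deriv γ t / (q / ((t - s : ℝ) : ℂ)) =
        (((t - s) * (Complex.normSq q)⁻¹ : ℝ) : ℂ) * ((starRingEnd ℂ) (q * (starRingEnd ℂ) (deriv γ t))) := by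
      rw [div_div_eq_mul_div, div_eq_mul_inv _ q, Complex.inv_def, map_mul, Complex.conj_conj]
      push_cast
      ring
    rw [this, Complex.re_ofReal_mul, Complex.conj_re]
    exact mul_nonpos_of_nonneg_of_nonpos
      (mul_nonneg (by linarith) (inv_nonneg.2 (Complex.normSq_nonneg _))) hft
  have hDne : ∀ a ∈ Icc s t, ∀ k : ℤ, D a ≠ 2 * Real.pi * k := by
    intro a ha k hk
    have hcos : Real.cos (D a) = 1 := by
      rw [hk, mul_comm]; exact Real.cos_int_mul_two_pi k
    rcases eq_or_lt_of_le ha.1 with rfl | has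
    · linarith
    rcases eq_or_lt_of_le ha.2 with rfl | hat
    · linarith
    -- `γ a` lies on the segment from `γ s` to `γ t`
    have hray : SameRay ℝ (γ a - γ s) (γ t - γ a) := by
      have h1 : S (a, t) = ((Real.exp ((l (a, t)).re - (l (s, a)).re) : ℝ) : ℂ) * S (s, a) := by
        rw [← div_eq_iff (hS0 _), ← hexpD, Complex.ofReal_exp, Complex.exp_eq_exp_iff_exists_int]
        refine ⟨k, ?_⟩
        apply Complex.ext
        · simp
        · have : (l (a, t)).im - (l (s, a)).im = 2 * Real.pi * k := hk
          simp [this]; ring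
      have h2 : γ t - γ a = ((t - a) * Real.exp ((l (a, t)).re - (l (s, a)).re) * (a - s)⁻¹) • (γ a - γ s) := by
        have hne : ((a : ℂ) - s) ≠ 0 := by exact_mod_cast (sub_pos.2 has).ne'
        rw [Complex.real_smul, ← hSe, ← hSe, h1]
        push_cast
        field_simp
      rw [h2]
      refine SameRay.sameRay_nonneg_smul_right _ ?_
      have := Real.exp_pos ((l (a, t)).re - (l (s, a)).re)
      exact mul_nonneg (mul_nonneg (by linarith) this.le) (inv_nonneg.2 (by linarith))
    have hadd := hray.norm_add
    rw [show γ a - γ s + (γ t - γ a) = q by rw [hq]; ring] at hadd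
    have p1 : 0 < ‖γ a - γ s‖ := norm_pos_iff.2 fun h => has.ne (hinj (sub_eq_zero.1 h)).symm
    have p2 : 0 < ‖γ t - γ a‖ := norm_pos_iff.2 fun h => hat.ne (hinj (sub_eq_zero.1 h)).symm
    have q1 : a - s < τ := by
      by_contra h
      have := hmin' s a hs.1 (hat.le.trans ht.2) (not_lt.1 h)
      linarith
    have q2 : t - a < τ := by
      by_contra h
      have := hmin' a t (hs.1.trans has.le) ht.2 (not_lt.1 h)
      linarith
    linarith
  have hDc : ContinuousOn D (Icc s t) :=
    ((him.comp (by fun_prop : Continuous fun a : ℝ => (a, t))).sub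
      (him.comp (by fun_prop : Continuous fun a : ℝ => (s, a)))).continuousOn
  obtain ⟨k, ⟨k1, k2⟩, k3, k4⟩ := same_period hst'.le hDc hDne
  obtain ⟨w1, w2⟩ := arg_window k1 k2 hDs
  obtain ⟨w3, w4⟩ := arg_window k3 k4 hDt
  have hsum : D s + D t = (l (t, t)).im - (l (s, s)).im := by simp only [hD]; ring
  -- the tangent direction compared with the direction field
  set j : ℝ → ℝ := fun a => (l (a, a)).im - (U (γ a)).im with hj
  have hjc : ∀ a ∈ Icc s t, 1 / 2 < Real.cos (j a) := by
    intro a ha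
    have h1 := cos_im_eq (l (a, a) - U (γ a))
    rw [Complex.exp_sub, hle, hSd, Complex.sub_im] at h1
    have h2 := hδ a ⟨hs.1.trans ha.1, ha.2.trans ht.2⟩
    set z := deriv γ a / Complex.exp (U (γ a))
    have h3 : 3 / 4 ≤ z.re := by
      have := (Complex.abs_re_le_norm (z - 1)).trans h2
      rw [Complex.sub_re, Complex.one_re] at this
      linarith [(abs_le.1 this).1]
    have h4 : ‖z‖ ≤ 5 / 4 := by
      have := norm_sub_norm_le z 1
      rw [norm_one] at this
      linarith
    have h5 : 0 < ‖z‖ := (by linarith : (0:ℝ) < z.re).trans_le (Complex.re_le_norm z)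
    change 1 / 2 < Real.cos ((l (a, a)).im - (U (γ a)).im)
    rw [h1, lt_div_iff₀ h5]
    linarith
  have hjcont : ContinuousOn (fun a => j a + Real.pi) (Icc s t) :=
    (((him.comp (by fun_prop : Continuous fun a : ℝ => (a, a))).sub
      (Complex.continuous_im.comp (hU.comp hγc))).add continuous_const).continuousOn
  obtain ⟨i, ⟨i1, i2⟩, i3, i4⟩ := same_period hst'.le hjcont (by
    intro a ha i hi
    have : Real.cos (j a + Real.pi) = 1 := by
      rw [hi, mul_comm]; exact Real.cos_int_mul_two_pi i
    rw [Real.cos_add_pi] at this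
    linarith [hjc a ha])
  have v1 := abs_lt.1 (arg_window' i1 i2 (hjc s ⟨le_rfl, hst'.le⟩))
  have v2 := abs_lt.1 (arg_window' i3 i4 (hjc t ⟨hst'.le, le_rfl⟩))
  have v3 := abs_le.1 (hη (γ t) (γ s) hd)
  have hjs : j s = (l (s, s)).im - (U (γ s)).im := rfl
  have hjt : j t = (l (t, t)).im - (U (γ t)).im := rfl
  have r1 : D s + D t < Real.pi := by linarith
  have r2 : -Real.pi < D s + D t := by linarith
  -- according to the sign of `k`, `D s + D t` would be at least `π` or at most `-π`
  rcases le_or_gt 0 k with hk | hk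
  · have : (0:ℝ) ≤ k := by exact_mod_cast hk
    nlinarith
  · have : (k:ℝ) ≤ -1 := by exact_mod_cast Int.le_sub_one_of_lt hk
    nlinarith

/-! ### Conjugating a translation to a given map -/

theorem complex_det_eq (A : ℂ →L[ℝ] ℂ) :
    A.det = (A 1).re * (A Complex.I).im - (A Complex.I).re * (A 1).im := by
  rw [ContinuousLinearMap.det, ← LinearMap.det_toMatrix Complex.basisOneI, Matrix.det_fin_two]
  simp [LinearMap.toMatrix_apply]

/-- The map conjugating the translation by `ε` to `E`, where `E` is the translation by `ε` on the
half plane `re z ≤ -4`: translate back to that half plane and iterate `E` as many times. -/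
noncomputable def conjMap (E : ℂ → ℂ) (ε : ℝ) (z : ℂ) : ℂ :=
  E^[⌈(z.re + 5) / ε⌉₊] (z - ((⌈(z.re + 5) / ε⌉₊ * ε : ℝ) : ℂ))

section conjMap

variable {E : ℂ → ℂ} {ε : ℝ}

/-- Extra translations cancel extra iterations once the point lies in the half plane where `E` is the
translation. -/
theorem iterate_shift (hε : 0 < ε) (hE : ∀ w : ℂ, w.re ≤ -4 → E w = w + ε) {z : ℂ} {n : ℕ}
    (hn : z.re - n * ε ≤ -4) (k : ℕ) :
    E^[n + k] (z - (((n + k : ℕ) * ε : ℝ) : ℂ)) = E^[n] (z - ((n * ε : ℝ) : ℂ)) := by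
  induction k with
  | zero => rfl
  | succ k ih =>
    rw [← ih, ← add_assoc, Function.iterate_succ_apply, hE]
    · congr 1; push_cast; ring
    · simp only [Complex.sub_re, Complex.ofReal_re]
      push_cast
      have : 0 ≤ (k:ℝ) * ε := by positivity
      nlinarith

theorem ceil_spec (hε : 0 < ε) (x : ℝ) : x - ⌈(x + 5) / ε⌉₊ * ε ≤ -5 := by
  have := Nat.le_ceil ((x + 5) / ε)
  rw [div_le_iff₀ hε] at this
  linarith

/-- Any number of translations reaching the half plane `re z ≤ -4` computes `conjMap`. -/
theorem conjMap_eq (hε : 0 < ε) (hE : ∀ w : ℂ, w.re ≤ -4 → E w = w + ε) {z : ℂ} {n : ℕ}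
    (hn : z.re - n * ε ≤ -4) : conjMap E ε z = E^[n] (z - ((n * ε : ℝ) : ℂ)) := by
  have hc := ceil_spec hε z.re
  rcases le_total n ⌈(z.re + 5) / ε⌉₊ with h | h
  · obtain ⟨k, hk⟩ := Nat.exists_eq_add_of_le h
    rw [conjMap, hk, iterate_shift hε hE hn]
  · obtain ⟨k, hk⟩ := Nat.exists_eq_add_of_le h
    rw [conjMap, hk, iterate_shift hε hE (by linarith)]

theorem conjMap_left (hε : 0 < ε) (hE : ∀ w : ℂ, w.re ≤ -4 → E w = w + ε) {z : ℂ}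
    (hz : z.re ≤ -4) : conjMap E ε z = z := by
  rw [conjMap_eq hε hE (n := 0) (by simpa using hz)]
  simp

theorem conjMap_add (hε : 0 < ε) (hE : ∀ w : ℂ, w.re ≤ -4 → E w = w + ε) (z : ℂ) :
    conjMap E ε (z + ε) = E (conjMap E ε z) := by
  have hc := ceil_spec hε z.re
  rw [conjMap_eq hε hE (z := z) (n := ⌈(z.re + 5) / ε⌉₊) (by linarith),
    conjMap_eq hε hE (z := z + ε) (n := ⌈(z.re + 5) / ε⌉₊ + 1)
      (by simp only [Complex.add_re, Complex.ofReal_re]; push_cast; linarith),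
    Function.iterate_succ_apply']
  congr 2
  push_cast; ring

theorem conjMap_of_im (hε : 0 < ε) (hE : ∀ w : ℂ, w.re ≤ -4 → E w = w + ε)
    (hE' : ∀ w : ℂ, 4 ≤ |w.im| → E w = w + ε) {z : ℂ} (hz : 4 ≤ |z.im|) : conjMap E ε z = z := by
  have h : ∀ (n : ℕ) (w : ℂ), 4 ≤ |w.im| → E^[n] w = w + ((n * ε : ℝ) : ℂ) := by
    intro n
    induction n with
    | zero => intro w _; simp
    | succ n ih =>
      intro w hw
      rw [Function.iterate_succ_apply, hE' w hw, ih]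
      · push_cast; ring
      · simpa using hw
  rw [conjMap, h _ _ (by simpa using hz)]
  ring

theorem conjMap_injective (hε : 0 < ε) (hE : ∀ w : ℂ, w.re ≤ -4 → E w = w + ε)
    (hinj : Function.Injective E) : Function.Injective (conjMap E ε) := by
  intro z w h
  have h1 := ceil_spec hε z.re
  have h2 := ceil_spec hε w.re
  set n := max ⌈(z.re + 5) / ε⌉₊ ⌈(w.re + 5) / ε⌉₊
  have h3 : (⌈(z.re + 5) / ε⌉₊ : ℝ) ≤ n := by exact_mod_cast le_max_left _ _
  have h4 : (⌈(w.re + 5) / ε⌉₊ : ℝ) ≤ n := by exact_mod_cast le_max_right _ _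
  rw [conjMap_eq hε hE (n := n) (by nlinarith), conjMap_eq hε hE (n := n) (by nlinarith)] at h
  exact sub_left_inj.1 (hinj.iterate n h)

/-- If `E` is the conjugate by `f` of the translation by `ε`, then `conjMap E ε` is `f`. -/
theorem conjMap_of_conj (hε : 0 < ε) {f f' : ℂ → ℂ} (hf' : ∀ z : ℂ, 4 ≤ ‖z‖ → f' z = z)
    (hf'f : ∀ z, f' (f z) = z) (hff' : ∀ z, f (f' z) = z) (hE : ∀ w, E w = f (f' w + ε)) (z : ℂ) :
    conjMap E ε z = f z := by
  have h : ∀ (n : ℕ) (w : ℂ), f' (E^[n] w) = f' w + ((n * ε : ℝ) : ℂ) := by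
    intro n
    induction n with
    | zero => intro w; simp
    | succ n ih =>
      intro w
      rw [Function.iterate_succ_apply, ih, hE, hf'f]
      push_cast; ring
  have hc := ceil_spec hε z.re
  have h2 : f' (conjMap E ε z) = z := by
    rw [conjMap, h, hf']
    · ring
    · refine le_trans ?_ (Complex.abs_re_le_norm _)
      refine le_abs.2 (Or.inr ?_)
      rw [Complex.sub_re, Complex.ofReal_re]
      linarith
  rw [← hff' (conjMap E ε z), h2]

/-- Joint smoothness of the conjugating maps of a smooth family. -/
theorem contDiff_conjMap {E : ℝ → ℂ → ℂ} (hε : 0 < ε)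
    (hE : ∀ t, ∀ w : ℂ, w.re ≤ -4 → E t w = w + ε)
    (hS : ContDiff ℝ ∞ (fun q : ℝ × ℂ => E q.1 q.2)) :
    ContDiff ℝ ∞ (fun q : ℝ × ℂ => conjMap (E q.1) ε q.2) := by
  have hi : ∀ n : ℕ, ContDiff ℝ ∞ (fun q : ℝ × ℂ => (E q.1)^[n] q.2) := by
    intro n
    induction n with
    | zero => exact contDiff_snd
    | succ n ih =>
      simp only [Function.iterate_succ_apply']
      exact hS.comp (contDiff_fst.prodMk ih)
  rw [contDiff_iff_contDiffAt]
  rintro ⟨t, z⟩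
  have hc := ceil_spec hε z.re
  set n := ⌈(z.re + 5) / ε⌉₊
  have h1 : ContDiff ℝ ∞ (fun q : ℝ × ℂ => (E q.1)^[n] (q.2 - ((n * ε : ℝ) : ℂ))) :=
    (hi n).comp (contDiff_fst.prodMk (contDiff_snd.sub contDiff_const))
  refine h1.contDiffAt.congr_of_eventuallyEq ?_
  have h2 : ∀ᶠ q : ℝ × ℂ in 𝓝 (t, z), q.2.re < z.re + 1 :=
    (isOpen_lt (by fun_prop) (by fun_prop)).mem_nhds (by simp)
  filter_upwards [h2] with q hq
  exact conjMap_eq hε (hE q.1) (by linarith)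

end conjMap

/-! ### Euler steps of a field and discrete Grönwall bounds -/

/-- Uniform bounds on a compactly supported logarithm `V` of a planar vector field `exp V`. -/
structure GoodField (m M L : ℝ) (V : ℂ → ℂ) : Prop where
  smooth : ContDiff ℝ ∞ V
  zero : ∀ z, 4 ≤ ‖z‖ → V z = 0
  lower : ∀ z, m ≤ ‖Complex.exp (V z)‖
  upper : ∀ z, ‖Complex.exp (V z)‖ ≤ M
  deriv_le : ∀ z, ‖fderiv ℝ (fun w => Complex.exp (V w)) z‖ ≤ L
  taylor : ∀ z h, ‖Complex.exp (V (z + h)) - Complex.exp (V z) -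
    fderiv ℝ (fun w => Complex.exp (V w)) z h‖ ≤ L * ‖h‖ ^ 2
  im_lip : ∀ p q, |(V p).im - (V q).im| ≤ L * ‖p - q‖

/-- One Euler step of length `ε` along the vector field `exp V`. -/
noncomputable def stepMap (V : ℂ → ℂ) (ε : ℝ) (z : ℂ) : ℂ := z + ε * Complex.exp (V z)

/-- The map conjugating the translation by `ε` to the Euler step. -/
noncomputable def stepConj (V : ℂ → ℂ) (ε : ℝ) : ℂ → ℂ := conjMap (stepMap V ε) ε

namespace GoodField

variable {m M L ε : ℝ} {V : ℂ → ℂ}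

theorem zero_of_re (h : GoodField m M L V) {w : ℂ} (hw : 4 ≤ |w.re|) : V w = 0 :=
  h.zero w (hw.trans (Complex.abs_re_le_norm w))

theorem zero_of_im (h : GoodField m M L V) {w : ℂ} (hw : 4 ≤ |w.im|) : V w = 0 :=
  h.zero w (hw.trans (Complex.abs_im_le_norm w))

theorem step_of_zero {w : ℂ} (hw : V w = 0) : stepMap V ε w = w + ε := by
  simp [stepMap, hw]

theorem step_left (h : GoodField m M L V) (w : ℂ) (hw : w.re ≤ -4) : stepMap V ε w = w + ε :=
  step_of_zero (h.zero_of_re (le_abs.2 (Or.inr (by linarith))))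

theorem smooth_exp (h : GoodField m M L V) : ContDiff ℝ ∞ (fun w => Complex.exp (V w)) :=
  h.smooth.cexp

theorem smooth_step (h : GoodField m M L V) : ContDiff ℝ ∞ (stepMap V ε) :=
  contDiff_id.add (contDiff_const.mul h.smooth_exp)

theorem fderiv_step (h : GoodField m M L V) (w v : ℂ) : fderiv ℝ (stepMap V ε) w v =
    v + ε * fderiv ℝ (fun w => Complex.exp (V w)) w v := by
  have h1 : HasFDerivAt (fun w => Complex.exp (V w)) (fderiv ℝ (fun w => Complex.exp (V w)) w) w :=
    (h.smooth_exp.differentiable (by simp)).differentiableAt.hasFDerivAt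
  have h2 := (hasFDerivAt_id (𝕜 := ℝ) w).add (h1.const_mul (ε : ℂ))
  have h3 : fderiv ℝ (stepMap V ε) w = _ := h2.fderiv
  rw [h3]
  simp

theorem step_injective (h : GoodField m M L V) (hε : 0 < ε) (hL : ε * L ≤ 1 / 4) :
    Function.Injective (stepMap V ε) := by
  intro z w hzw
  have h1 : ‖Complex.exp (V z) - Complex.exp (V w)‖ ≤ L * ‖z - w‖ :=
    convex_univ.norm_image_sub_le_of_norm_fderiv_le (𝕜 := ℝ)
      (f := fun w => Complex.exp (V w))
      (fun x _ => (h.smooth_exp.differentiable (by simp)).differentiableAt)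
      (fun x _ => h.deriv_le x) (mem_univ _) (mem_univ _)
  have h2 : z - w = -(ε * (Complex.exp (V z) - Complex.exp (V w))) := by
    simp only [stepMap] at hzw
    linear_combination hzw
  have h3 : ‖z - w‖ = ε * ‖Complex.exp (V z) - Complex.exp (V w)‖ := by
    conv_lhs => rw [h2]
    rw [norm_neg, norm_mul, Complex.norm_real, Real.norm_of_nonneg hε.le]
  have h4 : ‖z - w‖ = 0 := by
    have := norm_nonneg (z - w)
    nlinarith [mul_le_mul_of_nonneg_left h1 hε.le, mul_le_mul_of_nonneg_right hL this]
  exact sub_eq_zero.1 (norm_eq_zero.1 h4)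

/-- The Euler step is a small perturbation of the identity, so it preserves orientation. -/
theorem det_step_pos (h : GoodField m M L V) (hε : 0 < ε) (hL : ε * L ≤ 1 / 4) (w : ℂ) :
    0 < (fderiv ℝ (stepMap V ε) w).det := by
  have hb : ∀ v : ℂ, ‖v‖ = 1 →
      ‖(ε : ℂ) * fderiv ℝ (fun w => Complex.exp (V w)) w v‖ ≤ 1 / 4 := by
    intro v hv
    rw [norm_mul, Complex.norm_real, Real.norm_of_nonneg hε.le]
    have := (fderiv ℝ (fun w => Complex.exp (V w)) w).le_of_opNorm_le (h.deriv_le w) v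
    rw [hv, mul_one] at this
    exact (mul_le_mul_of_nonneg_left this hε.le).trans hL
  rw [complex_det_eq, h.fderiv_step, h.fderiv_step]
  have h1 := hb 1 (by simp)
  have h2 := hb Complex.I (by simp)
  set a := (ε : ℂ) * fderiv ℝ (fun w => Complex.exp (V w)) w 1
  set b := (ε : ℂ) * fderiv ℝ (fun w => Complex.exp (V w)) w Complex.I
  have a1 := abs_le.1 ((Complex.abs_re_le_norm a).trans h1)
  have a2 := abs_le.1 ((Complex.abs_im_le_norm a).trans h1)
  have b1 := abs_le.1 ((Complex.abs_re_le_norm b).trans h2)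
  have b2 := abs_le.1 ((Complex.abs_im_le_norm b).trans h2)
  simp only [Complex.add_re, Complex.add_im, Complex.one_re, Complex.one_im, Complex.I_re,
    Complex.I_im]
  nlinarith

theorem conj_left (h : GoodField m M L V) (hε : 0 < ε) {z : ℂ} (hz : z.re ≤ -4) :
    stepConj V ε z = z := conjMap_left hε h.step_left hz

theorem conj_add (h : GoodField m M L V) (hε : 0 < ε) (z : ℂ) :
    stepConj V ε (z + ε) = stepMap V ε (stepConj V ε z) := conjMap_add hε h.step_left z

theorem conj_of_im (h : GoodField m M L V) (hε : 0 < ε) {z : ℂ} (hz : 4 ≤ |z.im|) :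
    stepConj V ε z = z :=
  conjMap_of_im hε h.step_left (fun _ hw => step_of_zero (h.zero_of_im hw)) hz

theorem smooth_conj (h : GoodField m M L V) (hε : 0 < ε) : ContDiff ℝ ∞ (stepConj V ε) := by
  have h1 : ContDiff ℝ ∞ (fun q : ℝ × ℂ => stepConj V ε q.2) :=
    contDiff_conjMap (E := fun _ => stepMap V ε) hε (fun _ => h.step_left)
      (h.smooth_step.comp contDiff_snd)
  exact h1.comp (contDiff_const.prodMk contDiff_id : ContDiff ℝ ∞ (fun z : ℂ => ((0:ℝ), z)))

theorem fderiv_conj_add (h : GoodField m M L V) (hε : 0 < ε) (z : ℂ) :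
    fderiv ℝ (stepConj V ε) (z + ε) =
      (fderiv ℝ (stepMap V ε) (stepConj V ε z)).comp (fderiv ℝ (stepConj V ε) z) := by
  rw [← fderiv_comp z (h.smooth_step.differentiable (by simp)).differentiableAt
    ((h.smooth_conj hε).differentiable (by simp)).differentiableAt, ← fderiv_comp_add_right]
  congr 1
  ext w
  exact h.conj_add hε w

theorem fderiv_conj_left (h : GoodField m M L V) (hε : 0 < ε) {z : ℂ} (hz : z.re ≤ -5) :
    fderiv ℝ (stepConj V ε) z = ContinuousLinearMap.id ℝ ℂ := by
  have h2 : ∀ᶠ w : ℂ in 𝓝 z, w.re < -4 :=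
    (isOpen_lt (by fun_prop) (by fun_prop)).mem_nhds (by simp only [mem_setOf_eq]; linarith)
  have h3 : stepConj V ε =ᶠ[𝓝 z] id := by
    filter_upwards [h2] with w hw
    exact h.conj_left hε hw.le
  rw [h3.fderiv_eq, fderiv_id]

end GoodField

/-- Induction from the half plane `re z ≤ -5` by translations of length `ε`, keeping track of the
number of translations. -/
theorem shift_induction {ε : ℝ} (hε : 0 < ε) {Q : ℕ → ℂ → Prop}
    (h0 : ∀ z : ℂ, z.re ≤ -5 → Q 0 z) (hs : ∀ k z, Q k z → Q (k + 1) (z + ε)) (z : ℂ) :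
    Q ⌈(z.re + 5) / ε⌉₊ z := by
  have h1 : ∀ (k : ℕ) (w : ℂ), w.re ≤ -5 → Q k (w + ((k * ε : ℝ) : ℂ)) := by
    intro k
    induction k with
    | zero => intro w hw; simpa using h0 w hw
    | succ k ih =>
      intro w hw
      have := hs k _ (ih w hw)
      convert this using 1
      push_cast; ring
  have h2 := h1 ⌈(z.re + 5) / ε⌉₊ (z - ((⌈(z.re + 5) / ε⌉₊ * ε : ℝ) : ℂ))
    (by rw [Complex.sub_re, Complex.ofReal_re]; exact ceil_spec hε z.re)
  simpa using h2

theorem ceil_mul_le {ε T x : ℝ} (hε : 0 < ε) (hε1 : ε ≤ 1) (hT : 1 ≤ T) (hx : x ≤ T - 6) :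
    ⌈(x + 5) / ε⌉₊ * ε ≤ T := by
  rcases le_total 0 (x + 5) with h | h
  · have := (Nat.ceil_lt_add_one (div_nonneg h hε.le)).le
    have h2 := mul_le_mul_of_nonneg_right this hε.le
    rw [add_mul, div_mul_cancel₀ _ hε.ne'] at h2
    linarith
  · rw [Nat.ceil_eq_zero.2 (div_nonpos_of_nonpos_of_nonneg h hε.le)]
    simp; linarith

namespace GoodField

variable {m M L ε : ℝ} {V : ℂ → ℂ}

/-- The conjugating map preserves orientation, as do the translation and the Euler step. -/
theorem det_conj_pos (h : GoodField m M L V) (hε : 0 < ε) (hL : ε * L ≤ 1 / 4) (z : ℂ) :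
    0 < (fderiv ℝ (stepConj V ε) z).det := by
  refine shift_induction (Q := fun _ z => 0 < (fderiv ℝ (stepConj V ε) z).det) hε ?_ ?_ z
  · intro z hz
    rw [h.fderiv_conj_left hε hz]
    simp [complex_det_eq]
  · intro _ z hz
    rw [h.fderiv_conj_add hε]
    change 0 < LinearMap.det (((fderiv ℝ (stepMap V ε) (stepConj V ε z) : ℂ →L[ℝ] ℂ) : ℂ →ₗ[ℝ] ℂ) ∘ₗ
      (fderiv ℝ (stepConj V ε) z : ℂ →L[ℝ] ℂ))
    rw [LinearMap.det_comp]
    exact mul_pos (h.det_step_pos hε hL _) hz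

theorem pow_le {k : ℕ} {T : ℝ} (hL : 0 ≤ ε * L) (hL0 : 0 ≤ L) (hk : k * ε ≤ T) :
    (1 + ε * L) ^ k ≤ Real.exp (L * T) := by
  calc (1 + ε * L) ^ k ≤ (Real.exp (ε * L)) ^ k :=
        pow_le_pow_left₀ (by positivity) (by linarith [Real.add_one_le_exp (ε * L)]) k
    _ = Real.exp (L * (k * ε)) := by rw [← Real.exp_nat_mul]; congr 1; ring
    _ ≤ _ := Real.exp_le_exp.2 (mul_le_mul_of_nonneg_left hk hL0)

/-- Discrete Grönwall bound for the derivative of the conjugating map. -/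
theorem norm_fderiv_conj_le (h : GoodField m M L V) (hε : 0 < ε) (hε1 : ε ≤ 1) (hL : 0 ≤ L)
    {T : ℝ} (hT : 1 ≤ T) {z : ℂ} (hz : z.re ≤ T - 6) (v : ℂ) :
    ‖fderiv ℝ (stepConj V ε) z v‖ ≤ Real.exp (L * T) * ‖v‖ := by
  have hεL : 0 ≤ ε * L := by positivity
  have key := shift_induction
    (Q := fun k z => ‖fderiv ℝ (stepConj V ε) z v‖ ≤ (1 + ε * L) ^ k * ‖v‖) hε ?_ ?_ z
  · exact key.trans (mul_le_mul_of_nonneg_right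
      (pow_le hεL hL (ceil_mul_le hε hε1 hT hz)) (norm_nonneg _))
  · intro z hz
    simp [h.fderiv_conj_left hε hz]
  · intro k z hz
    rw [h.fderiv_conj_add hε, ContinuousLinearMap.comp_apply, h.fderiv_step]
    set u := fderiv ℝ (stepConj V ε) z v
    calc _ ≤ ‖u‖ + ε * (L * ‖u‖) := by
          refine (norm_add_le _ _).trans ?_
          rw [norm_mul, Complex.norm_real, Real.norm_of_nonneg hε.le]
          gcongr
          exact ContinuousLinearMap.le_of_opNorm_le _ (h.deriv_le _) _
      _ = (1 + ε * L) * ‖u‖ := by ring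
      _ ≤ (1 + ε * L) * ((1 + ε * L) ^ k * ‖v‖) := by gcongr
      _ = _ := by ring

/-- The conjugating map nearly maps the horizontal unit field to the field `exp V`. -/
theorem norm_fderiv_conj_sub_le (h : GoodField m M L V) (hε : 0 < ε) (hε1 : ε ≤ 1) (hL : 0 ≤ L)
    {T : ℝ} (hT : 1 ≤ T) {z : ℂ} (hz : z.re ≤ T - 6) :
    ‖fderiv ℝ (stepConj V ε) z 1 - Complex.exp (V (stepConj V ε z))‖ ≤
      Real.exp (L * T) * T * L * M ^ 2 * ε := by
  have hεL : 0 ≤ ε * L := by positivity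
  have key := shift_induction
    (Q := fun k z => ‖fderiv ℝ (stepConj V ε) z 1 - Complex.exp (V (stepConj V ε z))‖ ≤
      k * ((1 + ε * L) ^ k * (L * M ^ 2 * ε ^ 2))) hε ?_ ?_ z
  · have h1 := ceil_mul_le hε hε1 hT hz
    set k := ⌈(z.re + 5) / ε⌉₊
    calc _ ≤ k * ((1 + ε * L) ^ k * (L * M ^ 2 * ε ^ 2)) := key
      _ ≤ k * (Real.exp (L * T) * (L * M ^ 2 * ε ^ 2)) := by
        gcongr; exact pow_le hεL hL h1
      _ = (Real.exp (L * T) * (L * M ^ 2 * ε)) * (k * ε) := by ring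
      _ ≤ (Real.exp (L * T) * (L * M ^ 2 * ε)) * T := by gcongr
      _ = _ := by ring
  · intro z hz
    rw [h.fderiv_conj_left hε hz, h.conj_left hε (by linarith),
      h.zero_of_re (le_abs.2 (Or.inr (by linarith)))]
    simp
  · intro k z hz
    rw [h.fderiv_conj_add hε, ContinuousLinearMap.comp_apply, h.fderiv_step, h.conj_add hε]
    set w := stepConj V ε z
    set u := fderiv ℝ (stepConj V ε) z 1
    set D := fderiv ℝ (fun w => Complex.exp (V w)) w with hD
    have ht := h.taylor w (ε * Complex.exp (V w))
    rw [← hD] at ht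
    have hlin : D (ε * Complex.exp (V w)) = ε * D (Complex.exp (V w)) := by
      rw [← Complex.real_smul, map_smul, Complex.real_smul]
    rw [hlin] at ht
    have heq : u + ε * D u - Complex.exp (V (stepMap V ε w)) =
        (u - Complex.exp (V w)) + ε * D (u - Complex.exp (V w)) -
        (Complex.exp (V (w + ε * Complex.exp (V w))) - Complex.exp (V w) -
          ε * D (Complex.exp (V w))) := by
      rw [map_sub, stepMap]; ring
    rw [heq]
    set e := u - Complex.exp (V w)
    have hrem : L * ‖(ε:ℂ) * Complex.exp (V w)‖ ^ 2 ≤ L * M ^ 2 * ε ^ 2 := by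
      rw [norm_mul, Complex.norm_real, Real.norm_of_nonneg hε.le, mul_pow]
      have : ‖Complex.exp (V w)‖ ^ 2 ≤ M ^ 2 := pow_le_pow_left₀ (norm_nonneg _) (h.upper w) 2
      nlinarith [mul_le_mul_of_nonneg_left this (by positivity : 0 ≤ L * ε ^ 2)]
    have hone : 1 ≤ (1 + ε * L) ^ (k + 1) := one_le_pow₀ (by linarith)
    set c := L * M ^ 2 * ε ^ 2
    have hc : 0 ≤ c := by positivity
    calc _ ≤ (‖e‖ + ε * (L * ‖e‖)) + c := by
          refine (norm_sub_le _ _).trans (add_le_add ((norm_add_le _ _).trans ?_) (ht.trans hrem))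
          rw [norm_mul, Complex.norm_real, Real.norm_of_nonneg hε.le]
          gcongr
          exact ContinuousLinearMap.le_of_opNorm_le _ (h.deriv_le _) _
      _ = (1 + ε * L) * ‖e‖ + 1 * c := by ring
      _ ≤ (1 + ε * L) * (k * ((1 + ε * L) ^ k * c)) + (1 + ε * L) ^ (k + 1) * c := by gcongr
      _ = _ := by push_cast; ring

end GoodField

/-! ### Exit from the support of the field -/

namespace GoodField

variable {m M L ε : ℝ} {V : ℂ → ℂ}

theorem conj_injective (h : GoodField m M L V) (hε : 0 < ε) (hL : ε * L ≤ 1 / 4) :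
    Function.Injective (stepConj V ε) :=
  conjMap_injective hε h.step_left (h.step_injective hε hL)

theorem norm_exp_sub_le (h : GoodField m M L V) (z w : ℂ) :
    ‖Complex.exp (V z) - Complex.exp (V w)‖ ≤ L * ‖z - w‖ :=
  convex_univ.norm_image_sub_le_of_norm_fderiv_le (𝕜 := ℝ)
    (f := fun w => Complex.exp (V w))
    (fun _ _ => (h.smooth_exp.differentiable (by simp)).differentiableAt)
    (fun x _ => h.deriv_le x) (mem_univ _) (mem_univ _)

/-- Images of points of one horizontal line at distance at least `m / (16 L M)` stay apart. -/
theorem conj_no_return (h : GoodField m M L V) (hm : 0 < m) (hm1 : m ≤ 1) (hM : 1 ≤ M)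
    (hL : 1 ≤ L) (hε : 0 < ε) (hε1 : ε ≤ 1) (hεL : ε * L ≤ 1 / 4) {T : ℝ} (hT : 1 ≤ T)
    (hδ : Real.exp (L * T) * T * L * M ^ 2 * ε ≤ m / 4) {z : ℂ} (hz : z.re ≤ T - 6) {s : ℝ}
    (hs : m / (16 * L * M) ≤ s) :
    m ^ 2 / (64 * L * M) < ‖stepConj V ε z - stepConj V ε (z - s)‖ := by
  set F := stepConj V ε with hF
  have hFs := h.smooth_conj hε
  set c : ℝ → ℂ := fun x => (z - z.re) + x with hc
  have hcd : ∀ x, HasDerivAt c 1 x := fun x => Complex.ofRealCLM.hasDerivAt.const_add _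
  have hcs : ContDiff ℝ ∞ c := contDiff_const.add Complex.ofRealCLM.contDiff
  have hcre : ∀ x, (c x).re = x := fun x => by simp [hc]
  set γ : ℝ → ℂ := fun x => F (c x) with hγdef
  have hγs : ContDiff ℝ ∞ γ := hFs.comp hcs
  have hγd : ∀ x, HasDerivAt γ (fderiv ℝ F (c x) 1) x := fun x =>
    ((hFs.differentiable (by simp)).differentiableAt.hasFDerivAt).comp_hasDerivAt x (hcd x)
  have hδ' : ∀ x ≤ z.re, ‖deriv γ x - Complex.exp (V (γ x))‖ ≤ m / 4 := by
    intro x hx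
    rw [(hγd x).deriv]
    exact (h.norm_fderiv_conj_sub_le hε hε1 (by linarith) hT (by rw [hcre]; linarith)).trans hδ
  have hγM : ∀ x ≤ z.re, ‖deriv γ x‖ ≤ 2 * M := by
    intro x hx
    have h1 := hδ' x hx
    have h2 := h.upper (γ x)
    have h3 := norm_sub_norm_le (deriv γ x) (Complex.exp (V (γ x)))
    linarith
  have hτ : 0 < m / (16 * L * M) := by positivity
  -- over a parameter length at most `2 τ`, `τ = m / (16 L M)`, the field changes by at most `m / 4`,
  -- so the curve advances at speed at least `m / 2` in a fixed direction
  have key := no_near_return hγs (γ := γ) ?_ ?_ h.smooth.continuous (A := z.re - s) (B := z.re)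
    (τ := m / (16 * L * M)) (η := m ^ 2 / (64 * L * M)) hτ ?_ ?_ ?_ (z.re - s)
    ⟨le_rfl, by linarith⟩ z.re ⟨by linarith, le_rfl⟩ (by linarith)
  · have e1 : c z.re = z := by simp [hc]
    have e2 : c (z.re - s) = z - s := by simp only [hc]; push_cast; ring
    simpa only [hγdef, e1, e2] using key
  · intro x y hxy
    have := h.conj_injective hε hεL hxy
    simpa [hc] using this
  · intro x hx
    rw [(hγd x).deriv] at hx
    exact one_ne_zero (injective_of_det_ne_zero _ (h.det_conj_pos hε hεL (c x)).ne' 1 hx)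
  · intro x hx
    have h1 := hδ' x hx.2
    have h2 := h.lower (γ x)
    rw [div_sub_one (Complex.exp_ne_zero _), norm_div, div_le_iff₀ (by linarith)]
    linarith
  · intro a ha b hb hab hab2
    have hlip : ∀ x ∈ Icc a b, ‖γ x - γ a‖ ≤ 2 * M * (x - a) :=
      norm_image_sub_le_of_norm_deriv_le_segment' (f' := fun x => deriv γ x)
        (fun x _ => by rw [(hγd x).deriv]; exact (hγd x).hasDerivWithinAt)
        (fun x hx => hγM x (hx.2.le.trans hb.2))
    have h2 : ∀ x ∈ Icc a b, ‖(γ x - x * Complex.exp (V (γ a))) -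
        (γ a - a * Complex.exp (V (γ a)))‖ ≤ (m / 2) * (x - a) := by
      refine norm_image_sub_le_of_norm_deriv_le_segment'
        (f := fun x : ℝ => γ x - x * Complex.exp (V (γ a)))
        (f' := fun x => deriv γ x - Complex.exp (V (γ a))) ?_ ?_
      · intro x _
        rw [(hγd x).deriv]
        have h3 := (hγd x).sub ((Complex.ofRealCLM.hasDerivAt (x := x)).mul_const
          (Complex.exp (V (γ a))))
        simp only [Complex.ofRealCLM_apply, Complex.ofReal_one, one_mul] at h3
        exact h3.hasDerivWithinAt
      · intro x hx
        have h3 := hδ' x (hx.2.le.trans hb.2)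
        have h4 := h.norm_exp_sub_le (γ x) (γ a)
        have h5 := hlip x ⟨hx.1, hx.2.le⟩
        have h6 : L * ‖γ x - γ a‖ ≤ m / 4 := by
          calc L * ‖γ x - γ a‖ ≤ L * (2 * M * (2 * (m / (16 * L * M)))) := by
                gcongr
                exact h5.trans (mul_le_mul_of_nonneg_left (by linarith [hx.2]) (by linarith))
            _ = m / 4 := by field_simp; ring
        calc _ = ‖(deriv γ x - Complex.exp (V (γ x))) +
              (Complex.exp (V (γ x)) - Complex.exp (V (γ a)))‖ := by congr 1; ring
          _ ≤ m / 4 + m / 4 := (norm_add_le _ _).trans (add_le_add h3 (h4.trans h6))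
          _ = m / 2 := by ring
    have h3 := h2 b ⟨by linarith, le_rfl⟩
    have h4 : (b - a) * m ≤ ‖((b - a : ℝ) : ℂ) * Complex.exp (V (γ a))‖ := by
      rw [norm_mul, Complex.norm_real, Real.norm_of_nonneg (by linarith)]
      exact mul_le_mul_of_nonneg_left (h.lower _) (by linarith)
    have h5 : ‖((b - a : ℝ) : ℂ) * Complex.exp (V (γ a))‖ ≤ ‖γ b - γ a‖ + (m / 2) * (b - a) := by
      have : ((b - a : ℝ) : ℂ) * Complex.exp (V (γ a)) = (γ b - γ a) -
        ((γ b - b * Complex.exp (V (γ a))) - (γ a - a * Complex.exp (V (γ a)))) := by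
        push_cast; ring
      rw [this]
      exact (norm_sub_le _ _).trans (by gcongr)
    have h6 : m / (16 * L * M) * (m / 2) ≤ (b - a) * (m / 2) :=
      mul_le_mul_of_nonneg_right hab (by positivity)
    have h7 : m ^ 2 / (64 * L * M) * 2 = m / (16 * L * M) * (m / 2) := by field_simp; ring
    have h8 : 0 < m ^ 2 / (64 * L * M) := by positivity
    linarith
  · intro p q hpq
    have h1 := h.im_lip p q
    have h2 : L * ‖p - q‖ ≤ 1 / 64 := by
      calc L * ‖p - q‖ ≤ L * (m ^ 2 / (64 * L * M)) := by gcongr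
        _ = m ^ 2 / (64 * M) := by field_simp
        _ ≤ 1 / 64 := by
          rw [div_le_div_iff₀ (by positivity) (by norm_num)]
          nlinarith
    linarith [Real.pi_gt_three]

end GoodField

/-- Pigeonhole principle in a disc. -/
theorem exists_pigeonhole (R : ℝ) {η : ℝ} (hη : 0 < η) : ∃ J : ℕ, ∀ p : ℕ → ℂ,
    (∀ j ≤ J, ‖p j‖ ≤ R) → ∃ i j, i < j ∧ j ≤ J ∧ ‖p i - p j‖ ≤ η := by
  obtain ⟨t, -, ht, htc⟩ := (isCompact_closedBall (0:ℂ) R).finite_cover_balls (half_pos hη)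
  lift t to Finset ℂ using ht
  refine ⟨t.card, fun p hp => ?_⟩
  have h1 : ∀ j : ℕ, ∃ c, j ≤ t.card → c ∈ t ∧ dist (p j) c < η / 2 := by
    intro j
    by_cases hj : j ≤ t.card
    · have := htc (mem_closedBall_zero_iff.2 (hp j hj))
      simp only [mem_iUnion, Metric.mem_ball, Finset.mem_coe] at this
      obtain ⟨c, hc, hd⟩ := this
      exact ⟨c, fun _ => ⟨hc, hd⟩⟩
    · exact ⟨0, fun h => absurd h hj⟩
  choose c hc using h1
  obtain ⟨i, hi, j, hj, hij, hcij⟩ := Finset.exists_ne_map_eq_of_card_lt_of_maps_to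
    (s := Finset.range (t.card + 1)) (t := t) (by simp) (f := c)
    (fun j hj => (hc j (by have := Finset.mem_range.1 hj; omega)).1)
  have hi' : i ≤ t.card := by have := Finset.mem_range.1 hi; omega
  have hj' : j ≤ t.card := by have := Finset.mem_range.1 hj; omega
  have hd : dist (p i) (p j) ≤ η := by
    have h3 := dist_triangle_right (p i) (p j) (c i)
    have h4 := (hc i hi').2
    have h5 := (hc j hj').2
    rw [← hcij] at h5
    linarith
  rw [dist_eq_norm] at hd
  rcases lt_or_gt_of_ne hij with h | h
  · exact ⟨i, j, h, hj', hd⟩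
  · exact ⟨j, i, h, hi', by rwa [norm_sub_rev]⟩

namespace GoodField

variable {m M L ε : ℝ} {V : ℂ → ℂ}

/-- Beyond some abscissa depending only on the bounds, the image has left the support of `V`:
otherwise the backward orbit of the point would stay in the box `(-4, 4)²`, and by the pigeonhole
principle two far away points of one horizontal line would have close images. -/
theorem exists_exit (hm : 0 < m) (hm1 : m ≤ 1) (hM : 1 ≤ M) (hL : 1 ≤ L) :
    ∃ N : ℝ, 5 ≤ N ∧ ∀ ε > 0, ε ≤ 1 → ε * L ≤ 1 / 4 →
      Real.exp (L * (N + 7)) * (N + 7) * L * M ^ 2 * ε ≤ m / 4 → ∀ V, GoodField m M L V →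
      ∀ z : ℂ, N ≤ z.re → 4 ≤ (stepConj V ε z).re := by
  obtain ⟨J, hJ⟩ := exists_pigeonhole 8 (η := m ^ 2 / (64 * L * M)) (by positivity)
  refine ⟨2 * J + 5, by have : (0:ℝ) ≤ J := J.cast_nonneg
                        linarith, fun ε hε hε1 hεL hδ V h => ?_⟩
  set N : ℝ := 2 * J + 5 with hN
  have hJ0 : (0:ℝ) ≤ J := J.cast_nonneg
  have hinj := h.conj_injective hε hεL
  have hadv : ∀ w, 4 ≤ (stepConj V ε w).re →
      stepConj V ε (w + ε) = stepConj V ε w + ε := fun w hw => by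
    rw [h.conj_add hε, step_of_zero (h.zero_of_re (hw.trans (le_abs_self _)))]
  have hadvk : ∀ (k : ℕ) (w : ℂ), 4 ≤ (stepConj V ε w).re →
      4 ≤ (stepConj V ε (w + ((k * ε : ℝ) : ℂ))).re := by
    intro k
    induction k with
    | zero => intro w hw; simpa using hw
    | succ k ih =>
      intro w hw
      have h1 := ih w hw
      have h2 := hadv _ h1
      have e : w + (((k + 1 : ℕ) * ε : ℝ) : ℂ) = w + ((k * ε : ℝ) : ℂ) + ε := by push_cast; ring
      rw [e, h2, Complex.add_re, Complex.ofReal_re]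
      linarith
  have hfirst : ∀ z : ℂ, N ≤ z.re → z.re ≤ N + 1 → 4 ≤ (stepConj V ε z).re := by
    intro z hz1 hz2
    by_contra! hcon
    -- the spacing of the orbit must be a multiple of `ε`; this one lies in `[1, 2]`
    set K : ℝ := ⌈1 / ε⌉₊ * ε with hK
    have hK1 : 1 ≤ K := by
      have := mul_le_mul_of_nonneg_right (Nat.le_ceil (1 / ε)) hε.le
      rwa [div_mul_cancel₀ _ hε.ne'] at this
    have hK2 : K ≤ 2 := by
      have := mul_le_mul_of_nonneg_right
        (Nat.ceil_lt_add_one (by positivity : 0 ≤ 1 / ε)).le hε.le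
      rw [add_mul, div_mul_cancel₀ _ hε.ne'] at this
      linarith
    have hbox : ∀ j ≤ J, ‖stepConj V ε (z - ((j * K : ℝ) : ℂ))‖ ≤ 8 := by
      intro j hj
      have hj' : (j:ℝ) ≤ J := by exact_mod_cast hj
      have hj0 : (0:ℝ) ≤ j := j.cast_nonneg
      set w := z - ((j * K : ℝ) : ℂ) with hw
      have hwre : 5 ≤ w.re := by
        rw [hw, Complex.sub_re, Complex.ofReal_re]
        nlinarith
      have h1 : (stepConj V ε w).re < 4 := by
        by_contra! hc
        have := hadvk (j * ⌈1 / ε⌉₊) w hc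
        have e : w + (((j * ⌈1 / ε⌉₊ : ℕ) * ε : ℝ) : ℂ) = z := by
          rw [hw, hK]; push_cast; ring
        rw [e] at this
        linarith
      have h2 : -4 < (stepConj V ε w).re := by
        by_contra! hc
        have := hinj (h.conj_left hε hc)
        rw [this] at hc
        linarith
      have h3 : |(stepConj V ε w).im| < 4 := by
        by_contra! hc
        have := hinj (h.conj_of_im hε hc)
        rw [this] at h1
        linarith
      have h4 := Complex.norm_le_abs_re_add_abs_im (stepConj V ε w)
      have h5 : |(stepConj V ε w).re| ≤ 4 := abs_le.2 ⟨h2.le, h1.le⟩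
      linarith
    obtain ⟨i, j, hij, hjJ, hd⟩ := hJ _ hbox
    have hij' : (i:ℝ) + 1 ≤ j := by exact_mod_cast hij
    have hi0 : (0:ℝ) ≤ i := i.cast_nonneg
    have hτ : m / (16 * L * M) ≤ (j - i) * K := by
      have h1 : m / (16 * L * M) ≤ 1 := by
        rw [div_le_one (by positivity)]
        nlinarith [mul_le_mul hL hM (by norm_num) (by linarith)]
      nlinarith
    have := h.conj_no_return hm hm1 hM hL hε hε1 hεL (T := N + 7) (by linarith) hδ
      (z := z - ((i * K : ℝ) : ℂ)) (by rw [Complex.sub_re, Complex.ofReal_re]; nlinarith) hτ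
    have e : z - ((i * K : ℝ) : ℂ) - (((j - i) * K : ℝ) : ℂ) = z - ((j * K : ℝ) : ℂ) := by
      push_cast; ring
    rw [e] at this
    linarith
  intro z hz
  set k := ⌊(z.re - N) / ε⌋₊
  have hk1 : k * ε ≤ z.re - N := by
    have := Nat.floor_le (div_nonneg (sub_nonneg.2 hz) hε.le)
    rwa [le_div_iff₀ hε] at this
  have hk2 : z.re - N < (k + 1) * ε := by
    have := Nat.lt_floor_add_one ((z.re - N) / ε)
    rwa [div_lt_iff₀ hε] at this
  have := hadvk k (z - ((k * ε : ℝ) : ℂ)) (hfirst _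
    (by rw [Complex.sub_re, Complex.ofReal_re]; linarith)
    (by rw [Complex.sub_re, Complex.ofReal_re]; linarith))
  simpa using this

/-- Translation by `k ε` commutes with the conjugating map on the exit half plane. -/
theorem conj_exit (h : GoodField m M L V) (hε : 0 < ε) {N : ℝ}
    (hN : ∀ z : ℂ, N ≤ z.re → 4 ≤ (stepConj V ε z).re) {z : ℂ} (hz : N ≤ z.re) (k : ℕ) :
    stepConj V ε (z + ((k * ε : ℝ) : ℂ)) = stepConj V ε z + ((k * ε : ℝ) : ℂ) := by
  induction k with
  | zero => simp
  | succ k ih =>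
    have e : ((((k + 1 : ℕ) : ℝ) * ε : ℝ) : ℂ) = ((k * ε : ℝ) : ℂ) + ε := by push_cast; ring
    have hk : 0 ≤ k * ε := by positivity
    rw [e, ← add_assoc, h.conj_add hε, step_of_zero, ih, add_assoc]
    refine h.zero_of_re ((hN _ ?_).trans (le_abs_self _))
    rw [Complex.add_re, Complex.ofReal_re]
    linarith

/-- Positivity of the trace of the derivative on the exit strip. -/
theorem trace_nonneg (h : GoodField m M L V) (hm1 : m ≤ 1) (hL : 0 ≤ L)
    (hε : 0 < ε) (hε1 : ε ≤ 1) (hεL : ε * L ≤ 1 / 4) {T : ℝ} (hT : 1 ≤ T)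
    (hδ : Real.exp (L * T) * (Real.exp (L * T) * T * L * M ^ 2 * ε) ≤ m / 4) {z : ℂ}
    (hz : z.re ≤ T - 6) (hz4 : 4 ≤ (stepConj V ε z).re) :
    0 ≤ (fderiv ℝ (stepConj V ε) z 1).re + (fderiv ℝ (stepConj V ε) z Complex.I).im := by
  set A := fderiv ℝ (stepConj V ε) z with hA
  have h1 := h.norm_fderiv_conj_sub_le hε hε1 hL hT hz
  rw [h.zero_of_re (hz4.trans (le_abs_self _)), Complex.exp_zero, ← hA] at h1
  have h2 := h.norm_fderiv_conj_le hε hε1 hL hT hz Complex.I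
  rw [← hA, Complex.norm_I, mul_one] at h2
  have h3 := h.det_conj_pos hε hεL z
  rw [← hA, complex_det_eq] at h3
  have hP : 1 ≤ Real.exp (L * T) := Real.one_le_exp (by positivity)
  set P := Real.exp (L * T)
  set δ := P * T * L * M ^ 2 * ε
  have hδ0 : 0 ≤ δ := (norm_nonneg _).trans h1
  have hδ1 : δ ≤ 1 / 4 := by nlinarith
  have a1 := abs_le.1 ((Complex.abs_re_le_norm (A 1 - 1)).trans h1)
  have a2 := (Complex.abs_im_le_norm (A 1 - 1)).trans h1
  have b1 := (Complex.abs_re_le_norm (A Complex.I)).trans h2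
  simp only [Complex.sub_re, Complex.sub_im, Complex.one_re, Complex.one_im, sub_zero] at a1 a2
  have h4 : |(A Complex.I).re * (A 1).im| ≤ 1 / 4 := by
    rw [abs_mul]
    calc _ ≤ P * δ := mul_le_mul b1 a2 (abs_nonneg _) (by linarith)
      _ ≤ 1 / 4 := by linarith
  have h5 := (abs_le.1 h4).1
  have h6 : 3 / 4 ≤ (A 1).re := by linarith
  by_contra! hneg
  nlinarith

end GoodField

/-! ### Interpolation to the identity -/

theorem exists_deriv_smoothTransition_le : ∃ K : ℝ, 0 ≤ K ∧ ∀ x, |deriv Real.smoothTransition x| ≤ K := by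
  have hs : ContDiff ℝ ∞ Real.smoothTransition := Real.smoothTransition.contDiff
  have hc : Continuous (deriv Real.smoothTransition) := hs.continuous_deriv (by simp)
  obtain ⟨K, hK⟩ := (isCompact_Icc (a := (0:ℝ)) (b := 1)).exists_bound_of_continuousOn hc.continuousOn
  refine ⟨max K 0, le_max_right _ _, fun x => ?_⟩
  rcases lt_or_ge x 0 with h | h
  · have : Real.smoothTransition =ᶠ[𝓝 x] fun _ => 0 := by
      filter_upwards [Iio_mem_nhds h] with y hy
      exact Real.smoothTransition.zero_of_nonpos (le_of_lt hy)
    rw [this.deriv_eq]; simp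
  rcases lt_or_ge 1 x with h' | h'
  · have : Real.smoothTransition =ᶠ[𝓝 x] fun _ => 1 := by
      filter_upwards [Ioi_mem_nhds h'] with y hy
      exact Real.smoothTransition.one_of_one_le (le_of_lt hy)
    rw [this.deriv_eq]; simp
  · exact (hK x ⟨h, h'⟩).trans (le_max_left _ _)

/-- Interpolating to the identity a derivative with positive determinant and nonnegative trace
keeps it injective. -/
theorem interp_injective (A : ℂ →L[ℝ] ℂ) (hd : 0 < A.det)
    (ht : 0 ≤ (A 1).re + (A Complex.I).im) {s : ℝ} (h0 : 0 ≤ s) (h1 : s ≤ 1) (v : ℂ)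
    (hv : (1 - s) • A v + s • v = 0) : v = 0 := by
  refine injective_of_det_ne_zero ((1 - s) • A + s • ContinuousLinearMap.id ℝ ℂ) ?_ v
    (by simpa using hv)
  rw [complex_det_eq] at hd ⊢
  simp only [ContinuousLinearMap.add_apply, ContinuousLinearMap.smul_apply,
    ContinuousLinearMap.id_apply, Complex.add_re, Complex.add_im, Complex.real_smul,
    Complex.re_ofReal_mul, Complex.im_ofReal_mul, Complex.one_re, Complex.one_im, Complex.I_re,
    Complex.I_im]
  have e : ((1 - s) * (A 1).re + s * 1) * ((1 - s) * (A Complex.I).im + s * 1) -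
      ((1 - s) * (A Complex.I).re + s * 0) * ((1 - s) * (A 1).im + s * 0) =
      (1 - s) ^ 2 * ((A 1).re * (A Complex.I).im - (A Complex.I).re * (A 1).im) +
      s * (1 - s) * ((A 1).re + (A Complex.I).im) + s ^ 2 := by ring
  rw [e]
  have h2 : 0 ≤ s * (1 - s) * ((A 1).re + (A Complex.I).im) :=
    mul_nonneg (mul_nonneg h0 (by linarith)) ht
  rcases h0.eq_or_lt with rfl | hs
  · simp only [sub_zero, one_pow, one_mul, zero_mul, add_zero, ne_eq, OfNat.ofNat_ne_zero,
      not_false_eq_true, zero_pow]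
    exact hd.ne'
  · refine ne_of_gt ?_
    have : 0 ≤ (1 - s) ^ 2 * ((A 1).re * (A Complex.I).im - (A Complex.I).re * (A 1).im) :=
      mul_nonneg (sq_nonneg _) hd.le
    have : 0 < s ^ 2 := by positivity
    linarith

/-- A family of plane maps commuting with a small horizontal translation on a half plane
`N - 2 ≤ re z` can be interpolated to the identity far inside that half plane, slowly enough to
remain immersive. -/
theorem exists_cutoff {F : ℝ → ℂ → ℂ} (hF : ContDiff ℝ ∞ (fun q : ℝ × ℂ => F q.1 q.2))
    {N ε : ℝ} (hε : 0 < ε) (hε1 : ε ≤ 1) (hN : 0 ≤ N)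
    (hdet : ∀ t z, 0 < (fderiv ℝ (F t) z).det)
    (htr : ∀ t, ∀ z : ℂ, N - 1 ≤ z.re → z.re ≤ N →
      0 ≤ (fderiv ℝ (F t) z 1).re + (fderiv ℝ (F t) z Complex.I).im)
    (him : ∀ t, ∀ z : ℂ, 4 ≤ |z.im| → F t z = z) (hre : ∀ t, ∀ z : ℂ, z.re ≤ -4 → F t z = z)
    (hper : ∀ t, ∀ z : ℂ, N - 2 ≤ z.re → ∀ k : ℕ,
      F t (z + ((k * ε : ℝ) : ℂ)) = F t z + ((k * ε : ℝ) : ℂ))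
    (hF0 : ∀ t ≤ 0, F t = F 0) (hF1 : ∀ t, 1 ≤ t → F t = F 1) :
    ∃ (R : ℝ) (G : ℝ → ℂ → ℂ), ContDiff ℝ ∞ (fun q : ℝ × ℂ => G q.1 q.2) ∧
      (∀ t z v, fderiv ℝ (G t) z v = 0 → v = 0) ∧ (∀ t z, R ≤ ‖z‖ → G t z = z) ∧
      (∀ t z, z.re ≤ N → G t z = F t z) ∧ (∀ t z, F t z = z → G t z = z) := by
  have hFt : ∀ t, ContDiff ℝ ∞ (F t) := fun t =>
    hF.comp (contDiff_const.prodMk contDiff_id : ContDiff ℝ ∞ (fun z : ℂ => (t, z)))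
  have hDF : Continuous (fun q : ℝ × ℂ => fderiv ℝ (F q.1) q.2) :=
    (ContDiff.fderiv (n := ∞) (m := ∞) (f := fun q : ℝ × ℂ => F q.1)
      (hF.comp (by fun_prop : ContDiff ℝ ∞ (fun p : (ℝ × ℂ) × ℂ => (p.1.1, p.2))))
      contDiff_snd le_rfl).continuous
  have hclamp : ∀ t, ∃ t' ∈ Icc (0:ℝ) 1, F t = F t' := by
    intro t
    rcases le_total t 0 with h | h
    · exact ⟨0, by simp, hF0 t h⟩
    rcases le_total 1 t with h' | h'
    · exact ⟨1, by simp, hF1 t h'⟩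
    · exact ⟨t, ⟨h, h'⟩, rfl⟩
  -- reduction of the half plane to a strip of width one
  have hshift : ∀ z : ℂ, N ≤ z.re → ∃ (k : ℕ) (w : ℂ), N - 1 ≤ w.re ∧ w.re ≤ N ∧
      w.im = z.im ∧ z = w + ((k * ε : ℝ) : ℂ) := by
    intro z hz
    have h1 := Nat.le_ceil ((z.re - N) / ε)
    rw [div_le_iff₀ hε] at h1
    have h2 := mul_lt_mul_of_pos_right
      (Nat.ceil_lt_add_one (div_nonneg (sub_nonneg.2 hz) hε.le)) hε
    rw [add_mul, div_mul_cancel₀ _ hε.ne'] at h2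
    refine ⟨⌈(z.re - N) / ε⌉₊, z - ((⌈(z.re - N) / ε⌉₊ * ε : ℝ) : ℂ), ?_, ?_, ?_, by ring⟩
    · rw [Complex.sub_re, Complex.ofReal_re]; linarith
    · rw [Complex.sub_re, Complex.ofReal_re]; linarith
    · rw [Complex.sub_im, Complex.ofReal_im, sub_zero]
  have hperD : ∀ t, ∀ z : ℂ, N - 1 ≤ z.re → ∀ k : ℕ,
      fderiv ℝ (F t) (z + ((k * ε : ℝ) : ℂ)) = fderiv ℝ (F t) z := by
    intro t z hz k
    rw [← fderiv_comp_add_right]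
    have h2 : ∀ᶠ w : ℂ in 𝓝 z, N - 2 < w.re :=
      (isOpen_lt (by fun_prop) (by fun_prop)).mem_nhds (by simp only [mem_setOf_eq]; linarith)
    have h3 : (fun w => F t (w + ((k * ε : ℝ) : ℂ))) =ᶠ[𝓝 z]
        fun w => F t w + ((k * ε : ℝ) : ℂ) := by
      filter_upwards [h2] with w hw
      exact hper t w hw.le k
    rw [h3.fderiv_eq, fderiv_add_const]
  set Bx : Set ℂ := Icc (N - 1) N ×ℂ Icc (-5) 5 with hBx
  have hBxc : IsCompact Bx := isCompact_Icc.reProdIm isCompact_Icc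
  obtain ⟨C, hC⟩ : ∃ C : ℝ, ∀ t z, N ≤ z.re → ‖z - F t z‖ ≤ C := by
    obtain ⟨C, hC⟩ := ((isCompact_Icc (a := (0:ℝ)) (b := 1)).prod hBxc).exists_bound_of_continuousOn
      (f := fun q : ℝ × ℂ => q.2 - F q.1 q.2) (continuous_snd.sub hF.continuous).continuousOn
    refine ⟨max C 0, fun t z hz => ?_⟩
    rcases le_total 4 |z.im| with h | h
    · rw [him t z h]; simp
    obtain ⟨t', ht', htt⟩ := hclamp t
    obtain ⟨k, w, hw1, hw2, hw3, rfl⟩ := hshift z hz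
    rw [hper t w (by linarith) k, add_sub_add_right_eq_sub, htt]
    have h' := abs_le.1 h
    rw [← hw3] at h'
    exact (hC (t', w) ⟨ht', ⟨⟨hw1, hw2⟩, ⟨by linarith, by linarith⟩⟩⟩).trans (le_max_left _ _)
  have hC0 : 0 ≤ C := (norm_nonneg _).trans (hC 0 N (by simp))
  -- the interpolated derivatives are bounded below uniformly, by compactness
  obtain ⟨c, hc0, hc⟩ : ∃ c : ℝ, 0 < c ∧ ∀ t z, N ≤ z.re → ∀ s ∈ Icc (0:ℝ) 1, ∀ v : ℂ,
      c * ‖v‖ ≤ ‖(1 - s) • fderiv ℝ (F t) z v + s • v‖ := by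
    set S : Set (((ℝ × ℂ) × ℝ) × ℂ) := ((Icc (0:ℝ) 1 ×ˢ Bx) ×ˢ Icc (0:ℝ) 1) ×ˢ Metric.sphere (0:ℂ) 1
    have hS : IsCompact S :=
      ((isCompact_Icc.prod hBxc).prod isCompact_Icc).prod (isCompact_sphere _ _)
    have hcont : Continuous (fun q : ((ℝ × ℂ) × ℝ) × ℂ =>
        ‖(1 - q.1.2) • fderiv ℝ (F q.1.1.1) q.1.1.2 q.2 + q.1.2 • q.2‖) := by
      have h1 : Continuous (fun q : ((ℝ × ℂ) × ℝ) × ℂ => fderiv ℝ (F q.1.1.1) q.1.1.2) :=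
        hDF.comp (by fun_prop : Continuous (fun q : ((ℝ × ℂ) × ℝ) × ℂ => q.1.1))
      have h2 : Continuous (fun q : ((ℝ × ℂ) × ℝ) × ℂ => fderiv ℝ (F q.1.1.1) q.1.1.2 q.2) :=
        h1.clm_apply continuous_snd
      fun_prop
    have hpos : ∃ c : ℝ, 0 < c ∧ ∀ q ∈ S, c ≤
        ‖(1 - q.1.2) • fderiv ℝ (F q.1.1.1) q.1.1.2 q.2 + q.1.2 • q.2‖ := by
      refine hS.exists_forall_le' hcont.continuousOn (a := 0) ?_
      rintro ⟨⟨⟨t, z⟩, s⟩, v⟩ ⟨⟨⟨-, hz⟩, hs⟩, hv⟩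
      rw [norm_pos_iff]
      intro h
      have := interp_injective _ (hdet t z) (htr t z hz.1.1 hz.1.2) hs.1 hs.2 v h
      rw [this] at hv
      simp at hv
    obtain ⟨c, hc0, hc⟩ := hpos
    refine ⟨min c 1, lt_min hc0 one_pos, fun t z hz s hs v => ?_⟩
    by_cases hv : v = 0
    · simp [hv]
    rcases le_total 5 |z.im| with h | h
    · have h2 : ∀ᶠ w : ℂ in 𝓝 z, 4 < |w.im| :=
        (isOpen_lt (by fun_prop) (by fun_prop)).mem_nhds (by simp only [mem_setOf_eq]; linarith)
      have h3 : F t =ᶠ[𝓝 z] id := by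
        filter_upwards [h2] with w hw
        exact him t w hw.le
      rw [h3.fderiv_eq, fderiv_id, ContinuousLinearMap.id_apply, ← add_smul, sub_add_cancel,
        one_smul]
      nlinarith [norm_nonneg v, min_le_right c 1]
    obtain ⟨t', ht', htt⟩ := hclamp t
    obtain ⟨k, w, hw1, hw2, hw3, rfl⟩ := hshift z hz
    rw [hperD t w hw1, htt]
    have h' := abs_le.1 h
    rw [← hw3] at h'
    have hv0 : ‖v‖ ≠ 0 := norm_ne_zero_iff.2 hv
    have := hc (((t', w), s), ‖v‖⁻¹ • v) ⟨⟨⟨ht', ⟨⟨hw1, hw2⟩, h'⟩⟩, hs⟩, by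
      simp [norm_smul, hv0]⟩
    simp only [map_smul] at this
    rw [smul_comm (1 - s), smul_comm s, ← smul_add, norm_smul, norm_inv, norm_norm,
      ← div_eq_inv_mul, le_div_iff₀ (by positivity)] at this
    exact (mul_le_mul_of_nonneg_right (min_le_left _ _) (norm_nonneg _)).trans this
  obtain ⟨K, hK0, hK⟩ := exists_deriv_smoothTransition_le
  -- a cutoff spread over a length `Λ` has derivative at most `K / Λ`; multiplied by the
  -- displacement it is then at most `c / 2`
  set Λ : ℝ := 1 + 2 * K * C / c with hΛ
  have hΛ1 : 1 ≤ Λ := by have : 0 ≤ 2 * K * C / c := by positivity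
                         linarith
  have hΛ0 : 0 < Λ := by linarith
  have hKC : K / Λ * C ≤ c / 2 := by
    rw [div_mul_eq_mul_div, div_le_iff₀ hΛ0]
    have : c / 2 * Λ = c / 2 + K * C := by rw [hΛ]; field_simp
    linarith
  set κ : ℂ → ℝ := fun z => Real.smoothTransition ((z.re - N) / Λ) with hκ
  have hκs : ContDiff ℝ ∞ κ :=
    Real.smoothTransition.contDiff.comp
      ((Complex.reCLM.contDiff.sub contDiff_const).div_const _)
  have hκ0 : ∀ z : ℂ, z.re ≤ N → κ z = 0 := fun z hz =>
    Real.smoothTransition.zero_of_nonpos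
      (div_nonpos_of_nonpos_of_nonneg (by linarith) hΛ0.le)
  have hκ1 : ∀ z : ℂ, N + Λ ≤ z.re → κ z = 1 := fun z hz =>
    Real.smoothTransition.one_of_one_le (by rw [le_div_iff₀ hΛ0]; linarith)
  have hκd : ∀ z v : ℂ, |fderiv ℝ κ z v| ≤ K / Λ * ‖v‖ := by
    intro z v
    have h1 : HasFDerivAt (fun w : ℂ => (w.re - N) / Λ) (Λ⁻¹ • Complex.reCLM) z := by
      have h := (Complex.reCLM.hasFDerivAt (x := z)).sub_const N |>.const_smul Λ⁻¹
      refine h.congr_of_eventuallyEq (Eventually.of_forall fun w => ?_)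
      simp [div_eq_inv_mul]
    have h2 : HasDerivAt Real.smoothTransition
        (deriv Real.smoothTransition ((z.re - N) / Λ)) ((z.re - N) / Λ) :=
      ((Real.smoothTransition.contDiff (n := 1)).differentiable
        (by simp)).differentiableAt.hasDerivAt
    have h3 := h2.comp_hasFDerivAt z h1
    have h4 : fderiv ℝ κ z = _ := h3.fderiv
    rw [h4]
    simp only [ContinuousLinearMap.smul_apply, Complex.reCLM_apply, smul_eq_mul, abs_mul, abs_inv,
      abs_of_pos hΛ0]
    calc _ ≤ K * (Λ⁻¹ * ‖v‖) := by
          gcongr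
          · exact hK _
          · exact Complex.abs_re_le_norm v
      _ = _ := by ring
  set G : ℝ → ℂ → ℂ := fun t z => F t z + κ z • (z - F t z) with hG
  refine ⟨N + Λ + 8, G, ?_, ?_, ?_, ?_, ?_⟩
  · exact hF.add ((hκs.comp contDiff_snd).smul (contDiff_snd.sub hF))
  · intro t z v hv
    rcases lt_or_ge z.re N with hz | hz
    · have h2 : ∀ᶠ w : ℂ in 𝓝 z, w.re < N :=
        (isOpen_lt (by fun_prop) (by fun_prop)).mem_nhds hz
      have h3 : G t =ᶠ[𝓝 z] F t := by
        filter_upwards [h2] with w hw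
        simp [hG, hκ0 w hw.le]
      rw [h3.fderiv_eq] at hv
      exact injective_of_det_ne_zero _ (hdet t z).ne' v hv
    · have h1 : HasFDerivAt (F t) (fderiv ℝ (F t) z) z :=
        ((hFt t).differentiable (by simp)).differentiableAt.hasFDerivAt
      have h2 : HasFDerivAt κ (fderiv ℝ κ z) z :=
        (hκs.differentiable (by simp)).differentiableAt.hasFDerivAt
      have h3 := h1.add (h2.smul ((hasFDerivAt_id z).sub h1))
      have h4 : fderiv ℝ (G t) z = _ := h3.fderiv
      rw [h4] at hv
      simp only [ContinuousLinearMap.add_apply, ContinuousLinearMap.smul_apply,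
        ContinuousLinearMap.sub_apply, ContinuousLinearMap.smulRight_apply,
        id_eq] at hv
      have h5 := hc t z hz (κ z) ⟨Real.smoothTransition.nonneg _, Real.smoothTransition.le_one _⟩ v
      have h6 : (1 - κ z) • fderiv ℝ (F t) z v + κ z • v = -(fderiv ℝ κ z v • (z - F t z)) := by
        rw [eq_neg_iff_add_eq_zero, ← hv, ContinuousLinearMap.id_apply, Pi.sub_apply, id_eq]
        module
      rw [h6, norm_neg, norm_smul, Real.norm_eq_abs] at h5
      have h7 : |fderiv ℝ κ z v| * ‖z - F t z‖ ≤ K / Λ * ‖v‖ * C :=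
        mul_le_mul (hκd z v) (hC t z hz) (norm_nonneg _) (by positivity)
      have h8 : K / Λ * C * ‖v‖ ≤ c / 2 * ‖v‖ := by gcongr
      have h9 := norm_nonneg v
      have h10 : ‖v‖ = 0 := by
        by_contra h
        have : 0 < ‖v‖ := lt_of_le_of_ne h9 (Ne.symm h)
        nlinarith
      exact norm_eq_zero.1 h10
  · intro t z hz
    have h1 := Complex.norm_le_abs_re_add_abs_im z
    rcases le_total 4 |z.im| with h | h
    · simp [hG, him t z h]
    rcases le_total z.re (-4) with h' | h'
    · simp [hG, hre t z h']
    · have h2 : N + Λ ≤ z.re := by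
        rcases abs_cases z.re with ⟨ha, _⟩ | ⟨ha, _⟩ <;> linarith
      simp [hG, hκ1 z h2]
  · intro t z hz
    simp [hG, hκ0 z hz]
  · intro t z hz
    simp [hG, hz]

/-! ### Isotopy of the plane -/

theorem contDiff_fderiv_param {V E F : Type*} [NormedAddCommGroup V] [NormedSpace ℝ V]
    [NormedAddCommGroup E] [NormedSpace ℝ E] [NormedAddCommGroup F] [NormedSpace ℝ F]
    {Θ : V → E → F} (hΘ : ContDiff ℝ ∞ (fun q : V × E => Θ q.1 q.2)) :
    ContDiff ℝ ∞ (fun q : V × E => fderiv ℝ (Θ q.1) q.2) :=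
  ContDiff.fderiv (n := ∞) (m := ∞) (f := fun q : V × E => Θ q.1)
    (hΘ.comp (by fun_prop : ContDiff ℝ ∞ (fun p : (V × E) × E => (p.1.1, p.2))))
    contDiff_snd le_rfl

/-- A jointly continuous family vanishing off a fixed disc is bounded uniformly over compact sets of
parameters. -/
theorem exists_uniform_bound {P E : Type*} [TopologicalSpace P] [NormedAddCommGroup E]
    {h : P → ℂ → E} (hc : Continuous fun q : P × ℂ => h q.1 q.2) {K : Set P} (hK : IsCompact K)
    (h0 : ∀ p ∈ K, ∀ z : ℂ, 5 ≤ ‖z‖ → h p z = 0) : ∃ B : ℝ, 0 ≤ B ∧ ∀ p ∈ K, ∀ z, ‖h p z‖ ≤ B := by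
  obtain ⟨B, hB⟩ := (hK.prod (isCompact_closedBall (0:ℂ) 5)).exists_bound_of_continuousOn
    hc.continuousOn
  refine ⟨max B 0, le_max_right _ _, fun p hp z => ?_⟩
  rcases le_total 5 ‖z‖ with h | h
  · rw [h0 p hp z h]; simp
  · exact (hB (p, z) ⟨hp, mem_closedBall_zero_iff.2 h⟩).trans (le_max_left _ _)

theorem fderiv_zero_of_const {E : Type*} [NormedAddCommGroup E] [NormedSpace ℝ E] {h : ℂ → E} {e : E}
    {r : ℝ} (hh : ∀ z : ℂ, r < ‖z‖ → h z = e) {z : ℂ} (hz : r < ‖z‖) : fderiv ℝ h z = 0 := by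
  have h2 : ∀ᶠ w : ℂ in 𝓝 z, r < ‖w‖ :=
    (isOpen_lt (by fun_prop) (by fun_prop)).mem_nhds hz
  have h3 : h =ᶠ[𝓝 z] fun _ => e := by
    filter_upwards [h2] with w hw
    exact hh w hw
  rw [h3.fderiv_eq]; simp

/-- The bounds of `GoodField` hold uniformly in a compact family. -/
theorem exists_goodField {U : ℝ → ℂ → ℂ} (hU : ContDiff ℝ ∞ (fun q : ℝ × ℂ => U q.1 q.2))
    (h0 : ∀ ε ∈ Icc (0:ℝ) 1, ∀ z : ℂ, 4 ≤ ‖z‖ → U ε z = 0) :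
    ∃ m M L : ℝ, 0 < m ∧ m ≤ 1 ∧ 1 ≤ M ∧ 1 ≤ L ∧ ∀ c ∈ Icc (0:ℝ) 1, ∀ ε ∈ Icc (0:ℝ) 1,
      GoodField m M L (fun z => c • U ε z) := by
  set V : ℝ × ℝ → ℂ → ℂ := fun p z => p.1 • U p.2 z with hV
  have hVs : ContDiff ℝ ∞ (fun q : (ℝ × ℝ) × ℂ => V q.1 q.2) := by
    have h1 : ContDiff ℝ ∞ (fun q : (ℝ × ℝ) × ℂ => U q.1.2 q.2) :=
      hU.comp (by fun_prop : ContDiff ℝ ∞ (fun q : (ℝ × ℝ) × ℂ => (q.1.2, q.2)))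
    exact (by fun_prop : ContDiff ℝ ∞ (fun q : (ℝ × ℝ) × ℂ => q.1.1)).smul h1
  set X : ℝ × ℝ → ℂ → ℂ := fun p z => Complex.exp (V p z) with hX
  have hXs : ContDiff ℝ ∞ (fun q : (ℝ × ℝ) × ℂ => X q.1 q.2) := hVs.cexp
  set K : Set (ℝ × ℝ) := Icc 0 1 ×ˢ Icc 0 1
  have hK : IsCompact K := isCompact_Icc.prod isCompact_Icc
  have hV0 : ∀ p ∈ K, ∀ z : ℂ, 4 ≤ ‖z‖ → V p z = 0 := fun p hp z hz => by
    simp [hV, h0 p.2 hp.2 z hz]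
  have hX0 : ∀ p ∈ K, ∀ z : ℂ, 4 < ‖z‖ → X p z = 1 := fun p hp z hz => by
    simp [hX, hV0 p hp z hz.le]
  have hDX := contDiff_fderiv_param hXs
  have hDX0 : ∀ p ∈ K, ∀ z : ℂ, 4 < ‖z‖ → fderiv ℝ (X p) z = 0 := fun p hp z hz =>
    fderiv_zero_of_const (hX0 p hp) hz
  obtain ⟨B, hB0, hB⟩ := exists_uniform_bound hVs.continuous hK
    (fun p hp z hz => hV0 p hp z (by linarith))
  obtain ⟨L1, hL10, hL1⟩ := exists_uniform_bound hDX.continuous hK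
    (fun p hp z hz => hDX0 p hp z (by linarith))
  obtain ⟨L2, hL20, hL2⟩ := exists_uniform_bound
    (contDiff_fderiv_param (Θ := fun p z => fderiv ℝ (X p) z) hDX).continuous hK
    (fun p hp z hz => fderiv_zero_of_const (hDX0 p hp) (by linarith))
  obtain ⟨L3, hL30, hL3⟩ := exists_uniform_bound (contDiff_fderiv_param hVs).continuous hK
    (fun p hp z hz => fderiv_zero_of_const (fun z hz => hV0 p hp z (le_of_lt hz)) (r := 4)
      (by linarith))
  set L := 1 + L1 + L2 + L3
  refine ⟨Real.exp (-B), Real.exp B, L, Real.exp_pos _, Real.exp_le_one_iff.2 (by linarith),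
    Real.one_le_exp hB0, by linarith, fun c hc ε hε => ?_⟩
  have hp : (c, ε) ∈ K := ⟨hc, hε⟩
  have hVp : ContDiff ℝ ∞ (V (c, ε)) :=
    hVs.comp (contDiff_const.prodMk contDiff_id : ContDiff ℝ ∞ (fun z : ℂ => ((c, ε), z)))
  have hXp : ContDiff ℝ ∞ (X (c, ε)) := hVp.cexp
  have hDXp : ContDiff ℝ ∞ (fderiv ℝ (X (c, ε))) :=
    hDX.comp (contDiff_const.prodMk contDiff_id : ContDiff ℝ ∞ (fun z : ℂ => ((c, ε), z)))
  have hre : ∀ z, |(V (c, ε) z).re| ≤ B := fun z => (Complex.abs_re_le_norm _).trans (hB _ hp z)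
  refine ⟨hVp, hV0 _ hp, fun z => ?_, fun z => ?_, fun z => ?_, fun z h => ?_, fun p q => ?_⟩
  · rw [Complex.norm_exp]
    exact Real.exp_le_exp.2 (neg_le_of_abs_le (hre z))
  · rw [Complex.norm_exp]
    exact Real.exp_le_exp.2 (le_of_abs_le (hre z))
  · exact (hL1 _ hp z).trans (by linarith)
  · have h1 : ∀ x ∈ Metric.closedBall z ‖h‖,
        ‖fderiv ℝ (X (c, ε)) x - fderiv ℝ (X (c, ε)) z‖ ≤ L2 * ‖h‖ := by
      intro x hx
      refine (convex_univ.norm_image_sub_le_of_norm_fderiv_le (𝕜 := ℝ)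
        (fun y _ => (hDXp.differentiable (by simp)).differentiableAt)
        (fun y _ => hL2 _ hp y) (mem_univ z) (mem_univ x)).trans ?_
      exact mul_le_mul_of_nonneg_left (by rwa [← dist_eq_norm]) hL20
    have h2 := (convex_closedBall z ‖h‖).norm_image_sub_le_of_norm_fderiv_le' (𝕜 := ℝ)
      (φ := fderiv ℝ (X (c, ε)) z)
      (fun y _ => (hXp.differentiable (by simp)).differentiableAt) h1
      (Metric.mem_closedBall_self (norm_nonneg _)) (y := z + h) (by simp)
    rw [add_sub_cancel_left] at h2
    refine h2.trans ?_
    nlinarith [sq_nonneg ‖h‖]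
  · have h1 := convex_univ.norm_image_sub_le_of_norm_fderiv_le (𝕜 := ℝ)
      (fun y _ => (hVp.differentiable (by simp)).differentiableAt)
      (fun y _ => hL3 _ hp y) (mem_univ q) (mem_univ p)
    refine ((Complex.abs_im_le_norm (V (c, ε) p - V (c, ε) q)).trans h1).trans ?_
    exact mul_le_mul_of_nonneg_right (by linarith) (norm_nonneg _)

/-- A continuous logarithm of `1` on the exterior of a disc times an interval is constant, since this
set is connected. -/
theorem log_one_const {u : ℝ × ℂ → ℂ} (hu : Continuous u)
    (h1 : ∀ ε ∈ Icc (-1:ℝ) 1, ∀ z : ℂ, 4 ≤ ‖z‖ → Complex.exp (u (ε, z)) = 1) :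
    ∃ c, Complex.exp c = 1 ∧ ∀ ε ∈ Icc (-1:ℝ) 1, ∀ z : ℂ, 4 ≤ ‖z‖ → u (ε, z) = c := by
  -- polar coordinates on the exterior of the disc
  set P : ℝ × ℝ × ℝ → ℝ × ℂ := fun p =>
    (max (-1) (min p.1 1), ((4 + |p.2.1| : ℝ) : ℂ) * Complex.exp (p.2.2 * Complex.I)) with hP
  have hPc : Continuous P := by fun_prop
  have hP1 : ∀ p, (P p).1 ∈ Icc (-1:ℝ) 1 := fun p =>
    ⟨le_max_left _ _, max_le (by norm_num) (min_le_right _ _)⟩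
  have hP2 : ∀ p, 4 ≤ ‖(P p).2‖ := fun p => by
    simp only [hP]
    rw [norm_mul, Complex.norm_exp_ofReal_mul_I, mul_one, Complex.norm_real, Real.norm_of_nonneg]
    · linarith [abs_nonneg p.2.1]
    · positivity
  have he : ∀ p, Complex.exp (u (P p)) = 1 := fun p => h1 _ (hP1 p) _ (hP2 p)
  have hlc : IsLocallyConstant (u ∘ P) := by
    rw [IsLocallyConstant.iff_eventually_eq]
    intro p
    have hcont : Continuous (u ∘ P) := hu.comp hPc
    filter_upwards [Metric.ball_mem_nhds _ one_pos |> hcont.continuousAt.preimage_mem_nhds] with q hq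
    obtain ⟨n, hn⟩ := Complex.exp_eq_exp_iff_exists_int.1 ((he q).trans (he p).symm)
    have hq' : ‖u (P q) - u (P p)‖ < 1 := by rw [← dist_eq_norm]; exact hq
    rw [hn, add_sub_cancel_left, norm_mul] at hq'
    have h2pi : ‖(2 * Real.pi * Complex.I : ℂ)‖ = 2 * Real.pi := by
      simp [abs_of_pos Real.pi_pos]
    rw [h2pi, Complex.norm_intCast] at hq'
    have hn0 : n = 0 := by
      by_contra h
      have : (1:ℝ) ≤ |(n:ℝ)| := by exact_mod_cast Int.one_le_abs h
      nlinarith [Real.pi_gt_three]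
    simp [hn, hn0]
  refine ⟨u (P (0, 0, 0)), he _, fun ε hε z hz => ?_⟩
  have h2 := hlc.apply_eq_of_preconnectedSpace (ε, ‖z‖ - 4, Complex.arg z) (0, 0, 0)
  have h3 : P (ε, ‖z‖ - 4, Complex.arg z) = (ε, z) := by
    simp only [hP, abs_of_nonneg (sub_nonneg.2 hz), min_eq_left hε.2, max_eq_right hε.1]
    rw [add_sub_cancel, Complex.norm_mul_exp_arg_mul_I]
  rw [Function.comp_apply, Function.comp_apply, h3] at h2
  exact h2

/-- A diffeomorphism `f` of the plane, equal to the identity off a disc, conjugates the translation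
by `ε` to `z ↦ z + ε exp (U ε z)`, with a smooth logarithm `U` vanishing off a disc. -/
theorem exists_log_field {f f' : ℂ → ℂ} (hf : ContDiff ℝ ∞ f) (hf' : ContDiff ℝ ∞ f')
    (hl : ∀ z, f' (f z) = z) (hr : ∀ z, f (f' z) = z) (hfid : ∀ z : ℂ, 2 ≤ ‖z‖ → f z = z) :
    ∃ U : ℝ → ℂ → ℂ, ContDiff ℝ ∞ (fun q : ℝ × ℂ => U q.1 q.2) ∧
      (∀ ε ∈ Icc (0:ℝ) 1, ∀ z : ℂ, 4 ≤ ‖z‖ → U ε z = 0) ∧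
      ∀ (ε : ℝ) z, z + ε * Complex.exp (U ε z) = f (f' z + ε) := by
  have hf'id : ∀ z : ℂ, 2 ≤ ‖z‖ → f' z = z := fun z hz => by
    conv_lhs => rw [← hfid z hz]
    exact hl z
  have hDf : ContDiff ℝ ∞ (fun z => fderiv ℝ f z 1) :=
    (hf.fderiv_right (m := ∞) (by simp)).clm_apply contDiff_const
  set W : ℝ × ℂ → ℂ := fun q => ∫ s in (0:ℝ)..1, fderiv ℝ f (f' q.2 + (s * q.1 : ℝ)) 1 with hW
  have harg : ContDiff ℝ ∞ (fun q : (ℝ × ℂ) × ℝ => f' q.1.2 + ((q.2 * q.1.1 : ℝ) : ℂ)) := by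
    have h1 : ContDiff ℝ ∞ (fun q : (ℝ × ℂ) × ℝ => f' q.1.2) := hf'.comp (by fun_prop)
    have h2 : ContDiff ℝ ∞ (fun q : (ℝ × ℂ) × ℝ => ((q.2 * q.1.1 : ℝ) : ℂ)) :=
      Complex.ofRealCLM.contDiff.comp
        (by fun_prop : ContDiff ℝ ∞ (fun q : (ℝ × ℂ) × ℝ => q.2 * q.1.1))
    exact h1.add h2
  have hWs : ContDiff ℝ ∞ W :=
    contDiff_intervalIntegral 0 1 (fun (q : ℝ × ℂ) s => fderiv ℝ f (f' q.2 + (s * q.1 : ℝ)) 1)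
      (hDf.comp harg)
  have hWeq : ∀ (ε : ℝ) z, z + ε * W (ε, z) = f (f' z + ε) := by
    intro ε z
    have hd : ∀ s ∈ uIcc (0:ℝ) 1, HasDerivAt (fun s : ℝ => f (f' z + (s * ε : ℝ)))
        (ε • fderiv ℝ f (f' z + (s * ε : ℝ)) 1) s := by
      intro s _
      have h1 : HasDerivAt (fun s : ℝ => f' z + ((s * ε : ℝ) : ℂ)) (ε : ℂ) s := by
        have := (((hasDerivAt_id s).mul_const ε).ofReal_comp).const_add (f' z)
        simpa using this
      have h2 := ((hf.differentiable (by simp)).differentiableAt.hasFDerivAt).comp_hasDerivAt s h1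
      have h3 : fderiv ℝ f (f' z + (s * ε : ℝ)) (ε : ℂ) =
          ε • fderiv ℝ f (f' z + (s * ε : ℝ)) 1 := by
        rw [← map_smul]; simp
      rw [h3] at h2
      exact h2
    have h4 := intervalIntegral.integral_eq_sub_of_hasDerivAt hd (by
      refine Continuous.intervalIntegrable ?_ _ _
      have hc : Continuous (fun s : ℝ => fderiv ℝ f (f' z + (s * ε : ℝ)) 1) :=
        hDf.continuous.comp (harg.continuous.comp
          (by fun_prop : Continuous fun s : ℝ => ((ε, z), s)))
      exact hc.const_smul ε)
    rw [intervalIntegral.integral_smul] at h4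
    simp only [one_mul, zero_mul, Complex.ofReal_zero, add_zero, hr] at h4
    rw [← Complex.real_smul, hW]
    simp only
    rw [h4]; ring
  have hWne : ∀ q, W q ≠ 0 := by
    rintro ⟨ε, z⟩ h
    by_cases hε : ε = 0
    · have h1 : W (ε, z) = fderiv ℝ f (f' z) 1 := by simp [hW, hε]
      have h2 : fderiv ℝ f' (f (f' z)) (fderiv ℝ f (f' z) 1) = 1 := by
        rw [← ContinuousLinearMap.comp_apply,
          ← fderiv_comp (f' z) (hf'.differentiable (by simp)).differentiableAt
          (hf.differentiable (by simp)).differentiableAt]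
        have : f' ∘ f = id := funext hl
        rw [this]; simp
      rw [← h1, h, map_zero] at h2
      exact zero_ne_one h2
    · have h1 := hWeq ε z
      rw [h, mul_zero, add_zero] at h1
      have h2 := congrArg f' h1
      rw [hl] at h2
      have : (ε : ℂ) = 0 := by linear_combination -h2
      exact hε (by exact_mod_cast this)
  have hW1 : ∀ ε ∈ Icc (-1:ℝ) 1, ∀ z : ℂ, 4 ≤ ‖z‖ → W (ε, z) = 1 := by
    intro ε hε z hz
    have h1 : ∀ s ∈ uIcc (0:ℝ) 1, fderiv ℝ f (f' z + (s * ε : ℝ)) 1 = 1 := by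
      intro s hs
      rw [uIcc_of_le zero_le_one] at hs
      have h2 : ‖((s * ε : ℝ) : ℂ)‖ ≤ 1 := by
        rw [Complex.norm_real, Real.norm_eq_abs, abs_mul]
        exact mul_le_one₀ (abs_le.2 ⟨by linarith [hs.1], hs.2⟩) (abs_nonneg _) (abs_le.2 hε)
      have h3 : 2 < ‖f' z + ((s * ε : ℝ) : ℂ)‖ := by
        rw [hf'id z (by linarith)]
        have := norm_sub_le_norm_add z ((s * ε : ℝ) : ℂ)
        linarith
      have h4 : ∀ᶠ w : ℂ in 𝓝 (f' z + ((s * ε : ℝ) : ℂ)), 2 < ‖w‖ :=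
        (isOpen_lt (by fun_prop) (by fun_prop)).mem_nhds h3
      have h5 : f =ᶠ[𝓝 (f' z + ((s * ε : ℝ) : ℂ))] id := by
        filter_upwards [h4] with w hw
        exact hfid w hw.le
      rw [h5.fderiv_eq]; simp
    simp only [hW]
    rw [intervalIntegral.integral_congr h1]
    simp
  obtain ⟨u, huc, hue⟩ := exists_continuous_log W hWs.continuous hWne
  have hus := contDiff_of_exp hWs huc hue
  obtain ⟨c, hc, huc⟩ := log_one_const huc (fun ε hε z hz => by rw [hue, hW1 ε hε z hz])
  refine ⟨fun ε z => u (ε, z) - c, hus.sub contDiff_const, fun ε hε z hz => ?_, fun ε z => ?_⟩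
  · simp [huc ε ⟨by linarith [hε.1], hε.2⟩ z hz]
  · simp only
    rw [Complex.exp_sub, hc, hue, div_one, hWeq]

/-- A diffeomorphism of the plane equal to the identity off a disc is joined to the identity by a
smooth family of immersions equal to the identity off a larger disc. -/
theorem exists_complex_isotopy {f f' : ℂ → ℂ} (hf : ContDiff ℝ ∞ f) (hf' : ContDiff ℝ ∞ f')
    (hl : ∀ z, f' (f z) = z) (hr : ∀ z, f (f' z) = z) (hfid : ∀ z : ℂ, 2 ≤ ‖z‖ → f z = z) :
    ∃ (R : ℝ) (G : ℝ → ℂ → ℂ), ContDiff ℝ ∞ (fun q : ℝ × ℂ => G q.1 q.2) ∧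
      (∀ t z v, fderiv ℝ (G t) z v = 0 → v = 0) ∧ (∀ t z, R ≤ ‖z‖ → G t z = z) ∧
      (∀ t ≤ 0, ∀ z, G t z = z) ∧ (∀ t, 1 ≤ t → ∀ z, G t z = f z) := by
  obtain ⟨U, hU, hU0, hUf⟩ := exists_log_field hf hf' hl hr hfid
  obtain ⟨m, M, L, hm, hm1, hM, hL, hgood⟩ := exists_goodField hU hU0
  obtain ⟨N, hN5, hN⟩ := GoodField.exists_exit hm hm1 hM hL
  have hf'id : ∀ z : ℂ, 4 ≤ ‖z‖ → f' z = z := fun z hz => by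
    conv_lhs => rw [← hfid z (by linarith)]
    exact hl z
  set C1 := Real.exp (L * (N + 7)) * (N + 7) * L * M ^ 2 with hC1
  set C2 := Real.exp (L * (N + 8)) * (Real.exp (L * (N + 8)) * (N + 8) * L * M ^ 2) with hC2
  have hC10 : 0 < C1 := by positivity
  have hC20 : 0 < C2 := by positivity
  set S := 4 * L + 4 * C1 / m + 4 * C2 / m with hS
  have hS1 : 1 ≤ S := by
    have : 0 < 4 * C1 / m := by positivity
    have : 0 < 4 * C2 / m := by positivity
    linarith
  -- `ε = 1 / S` is small enough for all the smallness conditions at once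
  obtain ⟨ε, hε, hεS⟩ : ∃ ε : ℝ, 0 < ε ∧ ε * S = 1 :=
    ⟨S⁻¹, by positivity, inv_mul_cancel₀ (by positivity)⟩
  have hp1 : 0 < ε * (4 * C1 / m) := by positivity
  have hp2 : 0 < ε * (4 * C2 / m) := by positivity
  have hp3 : 0 < ε * (4 * L) := by positivity
  have hexp : ε * (4 * L) + ε * (4 * C1 / m) + ε * (4 * C2 / m) = 1 := by rw [← hεS, hS]; ring
  have hε1 : ε ≤ 1 := by nlinarith
  have hεL : ε * L ≤ 1 / 4 := by linarith
  have hεC1 : C1 * ε ≤ m / 4 := by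
    have : ε * (4 * C1 / m) ≤ 1 := by linarith
    rw [mul_div_assoc', div_le_one hm] at this
    linarith
  have hεC2 : C2 * ε ≤ m / 4 := by
    have : ε * (4 * C2 / m) ≤ 1 := by linarith
    rw [mul_div_assoc', div_le_one hm] at this
    linarith
  set V : ℝ → ℂ → ℂ := fun t z => Real.smoothTransition t • U ε z with hV
  have hVg : ∀ t, GoodField m M L (V t) := fun t =>
    hgood _ ⟨Real.smoothTransition.nonneg _, Real.smoothTransition.le_one _⟩ ε ⟨hε.le, hε1⟩
  have hVs : ContDiff ℝ ∞ (fun q : ℝ × ℂ => V q.1 q.2) :=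
    (Real.smoothTransition.contDiff.comp contDiff_fst).smul
      (hU.comp (contDiff_const.prodMk contDiff_snd : ContDiff ℝ ∞ (fun q : ℝ × ℂ => (ε, q.2))))
  set F : ℝ → ℂ → ℂ := fun t => stepConj (V t) ε with hF
  have hFs : ContDiff ℝ ∞ (fun q : ℝ × ℂ => F q.1 q.2) :=
    contDiff_conjMap (E := fun t => stepMap (V t) ε) hε (fun t => (hVg t).step_left)
      (contDiff_snd.add (contDiff_const.mul hVs.cexp))
  have hexit : ∀ t, ∀ z : ℂ, N ≤ z.re → 4 ≤ (stepConj (V t) ε z).re := fun t =>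
    hN ε hε hε1 hεL hεC1 (V t) (hVg t)
  have hFle : ∀ t ≤ 0, ∀ z, F t z = z := by
    intro t ht z
    have hV0 : V t = fun _ => 0 := by
      ext w; simp [hV, Real.smoothTransition.zero_of_nonpos ht]
    exact conjMap_of_conj (f := id) (f' := id) hε (fun _ _ => rfl) (fun _ => rfl) (fun _ => rfl)
      (fun w => by simp [stepMap, hV0]) z
  have hFge : ∀ t, 1 ≤ t → ∀ z, F t z = f z := by
    intro t ht z
    have hV1 : V t = U ε := by
      ext w; simp [hV, Real.smoothTransition.one_of_one_le ht]
    exact conjMap_of_conj hε hf'id hl hr (fun w => by rw [stepMap, hV1, hUf]) z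
  obtain ⟨R, G, h1, h2, h3, h4, h5⟩ := exists_cutoff hFs (N := N + 2) hε hε1 (by linarith)
    (fun t z => (hVg t).det_conj_pos hε hεL z)
    (fun t z hz1 hz2 => (hVg t).trace_nonneg hm1 (by linarith) hε hε1 hεL (T := N + 8)
      (by linarith) (by rw [hC2] at hεC2; linarith) (by linarith) (hexit t z (by linarith)))
    (fun t z hz => (hVg t).conj_of_im hε hz) (fun t z hz => (hVg t).conj_left hε hz)
    (fun t z hz k => (hVg t).conj_exit hε (hexit t) (by linarith) k)
    (fun t ht => by ext z; rw [hFle t ht, hFle 0 le_rfl])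
    (fun t ht => by ext z; rw [hFge t ht, hFge 1 le_rfl])
  refine ⟨R, G, h1, h2, h3, fun t ht z => h5 t z (hFle t ht z), fun t ht z => ?_⟩
  rcases le_total z.re (N + 2) with hz | hz
  · rw [h4 t z hz, hFge t ht]
  · have hz2 : f z = z := hfid z (by linarith [Complex.re_le_norm z])
    rw [hz2]
    exact h5 t z (by rw [hFge t ht, hz2])

/-! ### Extension, rescaling and conclusion -/

/-- Extension by the identity of a map of the disc. -/
noncomputable def extendId (g : P2 → P2) (x : P2) : P2 := by
  classical exact if x ∈ Disc then g x else x

theorem extendId_of_mem {g : P2 → P2} {x : P2} (hx : x ∈ Disc) : extendId g x = g x := by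
  simp [extendId, hx]

theorem extendId_of_le {g : P2 → P2} {s : ℝ} (hg : ∀ x ∈ Disc, s ≤ ‖x‖ → g x = x) {x : P2}
    (hx : s ≤ ‖x‖) : extendId g x = x := by
  by_cases h : x ∈ Disc
  · rw [extendId_of_mem h, hg x h hx]
  · simp [extendId, h]

theorem disc_mem_nhds {x : P2} (hx : ‖x‖ < 1) : Disc ∈ 𝓝 x :=
  mem_of_superset (Metric.isOpen_ball.mem_nhds (mem_ball_zero_iff.2 hx))
    Metric.ball_subset_closedBall

theorem extendId_eventuallyEq {g : P2 → P2} {x : P2} (hx : ‖x‖ < 1) : extendId g =ᶠ[𝓝 x] g := by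
  filter_upwards [disc_mem_nhds hx] with y hy
  exact extendId_of_mem hy

theorem extendId_eventuallyEq_id {g : P2 → P2} {s : ℝ} (hg : ∀ x ∈ Disc, s ≤ ‖x‖ → g x = x)
    {x : P2} (hx : s < ‖x‖) : extendId g =ᶠ[𝓝 x] id := by
  filter_upwards [(isOpen_lt continuous_const continuous_norm).mem_nhds hx] with y hy
  exact extendId_of_le hg (le_of_lt hy)

theorem contDiff_extendId {g : P2 → P2} (hgs : ContDiffOn ℝ ∞ g Disc) {s : ℝ} (hs : s < 1)
    (hg : ∀ x ∈ Disc, s ≤ ‖x‖ → g x = x) : ContDiff ℝ ∞ (extendId g) := by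
  rw [contDiff_iff_contDiffAt]
  intro x
  rcases lt_or_ge ‖x‖ 1 with h | h
  · exact (hgs.contDiffAt (disc_mem_nhds h)).congr_of_eventuallyEq (extendId_eventuallyEq h)
  · exact contDiffAt_id.congr_of_eventuallyEq (extendId_eventuallyEq_id hg (hs.trans_le h))

theorem norm_equivRealProd_le (z : ℂ) : ‖Complex.equivRealProdCLM z‖ ≤ ‖z‖ :=
  max_le (Complex.abs_re_le_norm z) (Complex.abs_im_le_norm z)

theorem norm_le_two_mul_norm_equivRealProd (z : ℂ) : ‖z‖ ≤ 2 * ‖Complex.equivRealProdCLM z‖ := by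
  have h1 : |z.re| ≤ ‖Complex.equivRealProdCLM z‖ := le_max_left _ _
  have h2 : |z.im| ≤ ‖Complex.equivRealProdCLM z‖ := le_max_right _ _
  linarith [Complex.norm_le_abs_re_add_abs_im z]

/-- Smooth isotopy to the identity of a diffeomorphism of the plane supported in the square,
with support in the square: an isotopy with larger support is rescaled (Alexander's trick, stopped
before the scale degenerates). -/
theorem exists_plane_isotopy {f f' : P2 → P2} (hf : ContDiff ℝ ∞ f) (hf' : ContDiff ℝ ∞ f')
    (hl : ∀ x, f' (f x) = x) (hr : ∀ x, f (f' x) = x) (hfid : ∀ x : P2, 1 ≤ ‖x‖ → f x = x) :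
    ∃ Φ : ℝ → P2 → P2, ContDiff ℝ ∞ (fun q : ℝ × P2 => Φ q.1 q.2) ∧
      (∀ t x v, fderiv ℝ (Φ t) x v = 0 → v = 0) ∧ (∀ t x, 1 ≤ ‖x‖ → Φ t x = x) ∧
      (∀ x, Φ 0 x = x) ∧ ∀ x, Φ 1 x = f x := by
  set e := Complex.equivRealProdCLM with he
  obtain ⟨R, G, hG, hGi, hGR, hG0, hG1⟩ := exists_complex_isotopy
    (f := fun z => e.symm (f (e z))) (f' := fun z => e.symm (f' (e z)))
    (e.symm.contDiff.comp (hf.comp e.contDiff)) (e.symm.contDiff.comp (hf'.comp e.contDiff))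
    (fun z => by simp [hl]) (fun z => by simp [hr])
    (fun z hz => by
      have := norm_le_two_mul_norm_equivRealProd z
      rw [hfid _ (by rw [he]; linarith)]; simp)
  -- the isotopy is run at scale `R'` for half of the time, then its endpoint is rescaled to scale `1`
  set R' := max R 1
  set lam : ℝ → ℝ := fun t => R' + (1 - R') * Real.smoothTransition (2 * t - 1) with hlam
  have hR' : 1 ≤ R' := le_max_right _ _
  have hlam1 : ∀ t, 1 ≤ lam t := fun t => by
    have h2 := Real.smoothTransition.le_one (2 * t - 1)
    simp only [hlam]
    nlinarith
  have hlam0 : ∀ t, lam t ≠ 0 := fun t => by linarith [hlam1 t] |> fun h : 0 < lam t => h.ne'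
  have hlams : ContDiff ℝ ∞ lam :=
    contDiff_const.add (contDiff_const.mul (Real.smoothTransition.contDiff.comp (by fun_prop)))
  refine ⟨fun t x => (lam t)⁻¹ • e (G (2 * t) (e.symm (lam t • x))), ?_, ?_, ?_, ?_, ?_⟩
  · have h1 : ContDiff ℝ ∞ (fun q : ℝ × P2 => e.symm (lam q.1 • q.2)) :=
      e.symm.contDiff.comp ((hlams.comp contDiff_fst).smul contDiff_snd)
    have h2 : ContDiff ℝ ∞ (fun q : ℝ × P2 => G (2 * q.1) (e.symm (lam q.1 • q.2))) :=
      hG.comp ((contDiff_const.mul contDiff_fst).prodMk h1)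
    exact ((hlams.inv hlam0).comp contDiff_fst).smul (e.contDiff.comp h2)
  · intro t x v hv
    have hGt : ContDiff ℝ ∞ (G (2 * t)) :=
      hG.comp (contDiff_const.prodMk contDiff_id : ContDiff ℝ ∞ (fun z : ℂ => (2 * t, z)))
    have h1 : HasFDerivAt (fun x : P2 => lam t • x) (lam t • ContinuousLinearMap.id ℝ P2) x :=
      (hasFDerivAt_id x).const_smul (lam t)
    have h2 := e.symm.hasFDerivAt.comp x h1
    have h3 := ((hGt.differentiable (by simp)).differentiableAt.hasFDerivAt
      (x := e.symm (lam t • x))).comp x h2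
    have h4 := (e.hasFDerivAt.comp x h3).const_smul (lam t)⁻¹
    have h5 : fderiv ℝ (fun x => (lam t)⁻¹ • e (G (2 * t) (e.symm (lam t • x)))) x = _ :=
      h4.fderiv
    rw [h5] at hv
    have h6 : (lam t)⁻¹ • e (fderiv ℝ (G (2 * t)) (e.symm (lam t • x))
      (e.symm (lam t • v))) = 0 := hv
    rw [smul_eq_zero_iff_right (inv_ne_zero (hlam0 t)), e.map_eq_zero_iff] at h6
    have h7 := hGi _ _ _ h6
    rwa [e.symm.map_eq_zero_iff, smul_eq_zero_iff_right (hlam0 t)] at h7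
  · intro t x hx
    have h1 : ‖lam t • x‖ = lam t * ‖x‖ := by
      rw [norm_smul, Real.norm_of_nonneg (by linarith [hlam1 t])]
    have h2 : G (2 * t) (e.symm (lam t • x)) = e.symm (lam t • x) := by
      rcases le_total t (1 / 2) with ht | ht
      · refine hGR _ _ ?_
        have h3 := norm_equivRealProd_le (e.symm (lam t • x))
        rw [← he, e.apply_symm_apply, h1] at h3
        have h4 : lam t = R' := by
          simp [hlam, Real.smoothTransition.zero_of_nonpos (by linarith : 2 * t - 1 ≤ 0)]
        rw [h4] at h3 ⊢
        have : R ≤ R' := le_max_left _ _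
        nlinarith
      · rw [hG1 _ (by linarith), e.apply_symm_apply, hfid]
        rw [h1]
        nlinarith [hlam1 t]
    simp only
    rw [h2, e.apply_symm_apply, inv_smul_smul₀ (hlam0 t)]
  · intro x
    simp only
    rw [hG0 _ (by simp), e.apply_symm_apply, inv_smul_smul₀ (hlam0 0)]
  · intro x
    have h4 : lam 1 = 1 := by
      simp only [hlam]
      rw [Real.smoothTransition.one_of_one_le (by norm_num)]
      ring
    simp only [h4]
    rw [hG1 _ (by norm_num)]
    simp

/-- **Fragmentation via Hamiltonian isotopy.** Let `f₀ ∈ Diff^∞_ω(𝔻)` be the identity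
near `∂𝔻`.  For every neighbourhood `W` of the identity in the `C^∞` topology (i.e. for
every `r : ℕ`, `ε > 0`) there are `n ≥ 1` and `g₁, …, g_n ∈ W` area-preserving `C^∞`
diffeomorphisms with `f₀ = g_n ∘ ⋯ ∘ g₁`; moreover, for each fixed `k`, the `g_i` can be
chosen at `C^k` distance `O(1/n)` from the identity. -/
theorem fragmentation_near_identity
    (f₀ : DiscDiffeo ⊤) (hω : f₀.AreaPreserving)
    (hbd : ∃ s : ℝ, s < 1 ∧ ∀ x ∈ Disc, s ≤ ‖x‖ → f₀.toFun x = x) :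
    (∀ (r : ℕ) (ε : ℝ), 0 < ε →
      ∃ n : ℕ, 1 ≤ n ∧ ∃ g : Fin n → DiscDiffeo ⊤,
        (∀ i, (g i).AreaPreserving) ∧
        (∀ i, crDist r (g i).toFun id < ENNReal.ofReal ε) ∧
        ∀ x ∈ Disc, f₀.toFun x = seqComp (fun i => (g i).toFun) x) ∧
    (∀ k : ℕ, ∃ C : ℝ, 0 < C ∧ ∀ n : ℕ, 1 ≤ n →
      ∃ g : Fin n → DiscDiffeo ⊤,
        (∀ i, (g i).AreaPreserving) ∧
        (∀ i, crDist k (g i).toFun id ≤ ENNReal.ofReal (C / n)) ∧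
        ∀ x ∈ Disc, f₀.toFun x = seqComp (fun i => (g i).toFun) x) := by
  obtain ⟨s, hs, hid⟩ := hbd
  have hid' : ∀ x ∈ Disc, s ≤ ‖x‖ → f₀.invFun x = x := fun x hx hsx => by
    conv_lhs => rw [← hid x hx hsx]
    exact f₀.left_inv x hx
  have hout : ∀ {x : P2}, x ∉ Disc → s ≤ ‖x‖ := fun {x} hx => by
    rw [Disc, mem_closedBall_zero_iff, not_le] at hx
    linarith
  have hl : ∀ x, extendId f₀.invFun (extendId f₀.toFun x) = x := fun x => by
    by_cases hx : x ∈ Disc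
    · rw [extendId_of_mem hx, extendId_of_mem (f₀.mapsTo hx), f₀.left_inv x hx]
    · rw [extendId_of_le hid (hout hx), extendId_of_le hid' (hout hx)]
  have hr : ∀ x, extendId f₀.toFun (extendId f₀.invFun x) = x := fun x => by
    by_cases hx : x ∈ Disc
    · rw [extendId_of_mem hx, extendId_of_mem (f₀.mapsTo_inv hx), f₀.right_inv x hx]
    · rw [extendId_of_le hid' (hout hx), extendId_of_le hid (hout hx)]
  obtain ⟨G, hG, hGi, hGR, hG0, hG1⟩ := exists_plane_isotopy
    (contDiff_extendId f₀.contDiffOn hs hid) (contDiff_extendId f₀.contDiffOn_inv hs hid')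
    hl hr (fun x hx => extendId_of_le hid (hs.le.trans hx))
  have hdet : ∀ x, (fderiv ℝ (G 1) x).det = 1 := by
    intro x
    rw [show G 1 = extendId f₀.toFun from funext hG1]
    rcases lt_or_ge ‖x‖ 1 with h | h
    · rw [(extendId_eventuallyEq h).fderiv_eq, ← fderivWithin_of_mem_nhds (disc_mem_nhds h)]
      exact hω x (mem_closedBall_zero_iff.2 h.le)
    · rw [(extendId_eventuallyEq_id hid (hs.trans_le h)).fderiv_eq, fderiv_id]
      simp [ContinuousLinearMap.det]
  obtain ⟨Φ, Ψ, hΦ, hΨ, hΨΦ, hΦΨ, hΦm, hΨm, hΦd, hΦ0, hΦ1⟩ :=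
    exists_area_preserving_path hG hGi hGR hG0 hdet
  exact fragmentation_of_path f₀ hΦ hΨ hΨΦ hΦΨ hΦm hΨm hΦd hΦ0
    (fun x hx => by rw [hΦ1, hG1, extendId_of_mem hx])
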